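/- arXiv:2102.00480 — 3 statements merged into one kernel-verified Lean document; each statement's English description precedes it below -/
import Mathlib

section
/- In the unitary case, for every a ∈ (E'/E)_1 ∩ (E'/F')_1 there exists x ∈ X^j with det x = a. -/
open Matrix

namespace GaloisPair

variable {E' : Type} [Field E']

/-- `g ∈ G^j(E) = {g ∈ GL_n(E') : τ(g)ᵀ j g = j}`. -/
def Gj {n : ℕ} (τ : E' → E') (j g : Matrix (Fin n) (Fin n) E') : Prop :=
  IsUnit g ∧ (g.map τ)ᵀ * j * g = j

/-- `x ∈ X^j = {x ∈ G^j(E) : x·σ(x) = 1}`. -/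
def Xj {n : ℕ} (σ τ : E' → E') (j x : Matrix (Fin n) (Fin n) E') : Prop :=
  Gj τ j x ∧ x * x.map σ = 1

/-- `y ∈ Y_n(F)`: invertible, entries fixed by `σ` (i.e. in `F'`), and `τ(y)ᵀ = ε • y`. -/
def inYnF {n : ℕ} (σ τ : E' → E') (ε : E') (y : Matrix (Fin n) (Fin n) E') : Prop :=
  IsUnit y ∧ (∀ a b, σ (y a b) = y a b) ∧ (y.map τ)ᵀ = ε • y

end GaloisPair

open GaloisPair

theorem aux_c {E' : Type} [Field E'] (σ τ : E' →+* E')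
    (hσ2 : ∀ x, σ (σ x) = x) (hσ1 : ∃ x, σ x ≠ x) (hτ1 : ∃ x, τ x ≠ x) (hστ : ∃ x, τ x ≠ σ x) :
    ∃ c, σ c = c ∧ τ c ≠ c := by
  by_contra hcon
  push Not at hcon
  have key : ∀ c, τ c = c ∨ τ c = σ c := by
    intro c
    have h1 := hcon (c + σ c) (by rw [map_add, hσ2, add_comm])
    have h2 := hcon (c * σ c) (by rw [map_mul, hσ2, mul_comm])
    rw [map_add] at h1
    rw [map_mul] at h2
    have h3 : τ (σ c) = c + σ c - τ c := by linear_combination h1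
    rw [h3] at h2
    have : (τ c - c) * (τ c - σ c) = 0 := by linear_combination -h2
    rcases mul_eq_zero.mp this with h | h
    · left; exact sub_eq_zero.mp h
    · right; exact sub_eq_zero.mp h
  obtain ⟨u, hu⟩ := hτ1
  obtain ⟨w, hw⟩ := hστ
  have hu' := (key u).resolve_left hu
  have hw' := (key w).resolve_right hw
  rcases key (u + w) with h | h
  · rw [map_add, hw'] at h
    exact hu (add_right_cancel h)
  · rw [map_add, map_add, hu'] at h
    exact hw (add_left_cancel h)

theorem aux_v {E' : Type} [Field E'] (σ τ : E' →+* E') {n : ℕ} (hn : 1 ≤ n)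
    (hc : ∃ c, σ c = c ∧ τ c ≠ c)
    (j : Matrix (Fin n) (Fin n) E') (hj : IsUnit j) :
    ∃ v : Fin n → E', (∀ i, σ (v i) = v i) ∧ (fun i => τ (v i)) ⬝ᵥ (j *ᵥ v) ≠ 0 := by
  obtain ⟨c, hc1, hc2⟩ := hc
  by_contra hcon
  push Not at hcon
  have : Nonempty (Fin n) := ⟨⟨0, hn⟩⟩
  apply hj.ne_zero
  have hs : ∀ i (c : E'), (fun k => τ ((Pi.single i c : Fin n → E') k)) = Pi.single i (τ c) := by
    intro i c
    ext k
    by_cases h : k = i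
    · subst h; simp
    · simp [h]
  have hσs : ∀ i (c : E'), σ c = c → ∀ k, σ ((Pi.single i c : Fin n → E') k) = (Pi.single i c : Fin n → E') k := by
    intro i c h k
    by_cases h' : k = i
    · subst h'; simpa
    · simp [h']
  have hd : ∀ i (c : E'), σ c = c → τ c * (j i i * c) = 0 := by
    intro i c h
    have := hcon (Pi.single i c) (hσs i c h)
    rw [hs] at this
    simp at this
    rcases this with h | h <;> simp [h]
  have ho : ∀ i k (c : E'), σ c = c → j i k * c + τ c * j k i = 0 := by
    intro i k c h
    have := hcon (Pi.single i 1 + Pi.single k c) (fun l => by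
      simp only [Pi.add_apply, map_add, hσs k c h, hσs i 1 (map_one σ)])
    have e : (fun l => τ ((Pi.single i 1 + Pi.single k c : Fin n → E') l))
        = Pi.single i (1 : E') + Pi.single k (τ c) := by
      have h1 := hs i 1
      rw [map_one] at h1
      have h2 := hs k c
      ext l
      have h3 := congrFun h1 l
      have h4 := congrFun h2 l
      simp only [Pi.add_apply, map_add] at h3 h4 ⊢
      rw [h3, h4]
    rw [e] at this
    simp [Matrix.mulVec_add, add_dotProduct] at this
    have h1 := hd i 1 (map_one σ)
    have h2 := hd k c h
    simp only [map_one, one_mul, mul_one] at h1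
    linear_combination this - h1 - h2
  ext i k
  have h1 := ho i k 1 (map_one σ)
  have h2 := ho i k c hc1
  simp only [map_one, one_mul, mul_one] at h1
  have : (τ c - c) * j i k = 0 := by linear_combination τ c * h1 - h2
  simpa [sub_eq_zero, hc2] using this

/-- In the unitary case, for every
`a ∈ (E'/E)₁ ∩ (E'/F')₁ = {a : a·τ(a) = 1 ∧ a·σ(a) = 1}` there exists `x ∈ X^j` with
`det x = a`. -/
theorem stmt_8 (p : ℕ) [Fact p.Prime]
    (E' : Type) [Field E'] [Algebra ℚ_[p] E'] [FiniteDimensional ℚ_[p] E']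
    (σ τ : E' ≃ₐ[ℚ_[p]] E')
    (hσ2 : σ * σ = 1) (hτ2 : τ * τ = 1) (hcomm : σ * τ = τ * σ)
    (hσ1 : σ ≠ 1) (hτ1 : τ ≠ 1) (hστ : σ ≠ τ)
    (ε : E') (hε : ε = 1 ∨ ε = -1)
    (n : ℕ) (hn : 1 ≤ n)
    (j : Matrix (Fin n) (Fin n) E')
    (hj : inYnF ⇑σ ⇑τ ε j)
    (a : E') (ha₁ : a * τ a = 1) (ha₂ : a * σ a = 1) :
    ∃ x, Xj ⇑σ ⇑τ j x ∧ x.det = a := by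
  have hσ2' : ∀ x, σ (σ x) = x := fun x => DFunLike.congr_fun hσ2 x
  have hτ2' : ∀ x, τ (τ x) = x := fun x => DFunLike.congr_fun hτ2 x
  have hcomm' : ∀ x, σ (τ x) = τ (σ x) := fun x => DFunLike.congr_fun hcomm x
  obtain ⟨hju, hjσ, hjτ⟩ := hj
  have hc : ∃ c, (σ : E' →+* E') c = c ∧ (τ : E' →+* E') c ≠ c := by
    apply aux_c (σ : E' →+* E') (τ : E' →+* E')
    · exact hσ2'
    · by_contra h; push Not at h; exact hσ1 (AlgEquiv.ext h)
    · by_contra h; push Not at h; exact hτ1 (AlgEquiv.ext h)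
    · by_contra h; push Not at h; exact hστ (AlgEquiv.ext fun x => (h x).symm)
  obtain ⟨v, hv, hd⟩ := aux_v (σ : E' →+* E') (τ : E' →+* E') hn hc j hju
  replace hv : ∀ i, σ (v i) = v i := hv
  set u : Fin n → E' := fun i => τ (v i) with hu
  change u ⬝ᵥ (j *ᵥ v) ≠ 0 at hd
  set d := u ⬝ᵥ (j *ᵥ v) with hdd
  set w := u ᵥ* j with hw
  have hwv : w ⬝ᵥ v = d := by rw [hw, hdd, Matrix.dotProduct_mulVec]
  have hjτ' : ∀ i k, τ (j i k) = ε * j k i := by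
    intro i k
    have := congrFun (congrFun hjτ k) i
    simpa using this
  have hεε : ε * ε = 1 := by rcases hε with h | h <;> simp [h]
  have hε0 : ε ≠ 0 := by rcases hε with h | h <;> simp [h]
  have hwσ : ∀ i, σ (w i) = w i := by
    intro i
    simp only [hw, hu, Matrix.vecMul, dotProduct, map_sum, map_mul, hcomm', hv, hjσ]
  have hwτ : ∀ i, τ (w i) = ε * (j *ᵥ v) i := by
    intro i
    simp only [hw, hu, Matrix.vecMul, Matrix.mulVec, dotProduct, map_sum, map_mul, hτ2', hjτ',
      Finset.mul_sum]
    exact Finset.sum_congr rfl fun k _ => by ring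
  have hdσ : σ d = d := by
    rw [← hwv]
    simp only [dotProduct, map_sum, map_mul, hwσ, hv]
  have hdτ : τ d = ε * d := by
    rw [← hwv]
    simp only [dotProduct, map_sum, map_mul, hwτ]
    rw [← dotProduct.eq_1 w v, hwv, hdd, dotProduct, Finset.mul_sum]
    exact Finset.sum_congr rfl fun k _ => by simp only [hu]; ring
  set P : Matrix (Fin n) (Fin n) E' := d⁻¹ • Matrix.vecMulVec v w with hP
  have hPP : P * P = P := by
    rw [hP, Matrix.smul_mul, Matrix.mul_smul, Matrix.vecMulVec_mul_vecMulVec, hwv]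
    ext i k
    simp only [Matrix.vecMulVec_apply, Matrix.smul_apply, smul_eq_mul, Pi.smul_apply, MulOpposite.smul_eq_mul_unop, MulOpposite.unop_op]
    field_simp
  have hPσ : P.map σ = P := by
    ext i k
    simp [hP, Matrix.vecMulVec_apply, hv, hwσ, hdσ]
  have hPτ : (P.map τ)ᵀ * j = j * P := by
    have h1 : (P.map τ)ᵀ = d⁻¹ • Matrix.vecMulVec (j *ᵥ v) u := by
      ext i k
      simp only [hP, Matrix.transpose_apply, Matrix.map_apply, Matrix.smul_apply,
        Matrix.vecMulVec_apply, smul_eq_mul, map_mul, map_inv₀, hdτ, hwτ, hu]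
      field_simp
    rw [h1, hP, Matrix.smul_mul, Matrix.mul_smul, Matrix.vecMulVec_mul, Matrix.mul_vecMulVec]
  have hdet : (1 + (a - 1) • P).det = a := by
    have : (a - 1) • P = Matrix.vecMulVec (((a - 1) * d⁻¹) • v) w := by
      ext i k
      simp [hP, Matrix.vecMulVec_apply]
      ring
    rw [this, Matrix.vecMulVec_eq Unit, Matrix.det_one_add_replicateCol_mul_replicateRow,
      dotProduct_smul, hwv, smul_eq_mul]
    field_simp
    ring
  have ha0 : a ≠ 0 := left_ne_zero_of_mul_eq_one ha₁
  have hprod : ∀ b : E', a * b = 1 → (1 + (b - 1) • P) * (1 + (a - 1) • P) = 1 := by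
    intro b hb
    have : (1 + (b - 1) • P) * (1 + (a - 1) • P) = 1 + (a * b - 1) • P := by
      simp only [add_mul, mul_add, one_mul, mul_one, Matrix.smul_mul, Matrix.mul_smul, hPP]
      module
    rw [this, hb]; simp
  refine ⟨1 + (a - 1) • P, ⟨⟨?_, ?_⟩, ?_⟩, hdet⟩
  · rw [Matrix.isUnit_iff_isUnit_det, hdet]
    exact isUnit_iff_ne_zero.mpr ha0
  · have e : ((1 + (a - 1) • P).map τ)ᵀ = 1 + (τ a - 1) • (P.map τ)ᵀ := by
      ext i k
      simp [Matrix.one_apply, apply_ite τ, eq_comm]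
    have e2 : (1 + (τ a - 1) • (P.map τ)ᵀ) * j = j * (1 + (τ a - 1) • P) := by
      rw [add_mul, mul_add, Matrix.smul_mul, hPτ, Matrix.mul_smul j (τ a - 1) P, one_mul, mul_one]
    rw [e, e2, mul_assoc, hprod _ ha₁, mul_one]
  · have e : (1 + (a - 1) • P).map σ = 1 + (σ a - 1) • P := by
      nth_rewrite 2 [← hPσ]
      ext i k
      simp [Matrix.one_apply, apply_ite σ]
    rw [e]
    exact mul_eq_one_comm.mp (hprod _ ha₂)
end

section
/- In the orthogonal case, the orbit correspondence sending G^j(E)·x to (transpose(z)·j·z) ⋆ GL_n(F), where z ∈ GL_n(E) is any element with x = z·σ(z)^{-1}, restricts to: (i) a bijection between the SG^j(E)-orbits in SX^j and the GL_n(F)-orbits in (j ⋆ GL_n^F(E)) ∩ Y_n(F); and (ii) a bijection between the SG^j(E)-orbits in X^j \ SX^j and the GL_n(F)-orbits in (j ⋆ GL_n^{ıF}(E)) ∩ Y_n(F). Here GL_n^F(E) (resp. GL_n^{ıF}(E)) denotes the set of g ∈ GL_n(E) with det g ∈ F^× (resp. det g ∈ ı·F^×). -/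
open Matrix

namespace OrthPair

variable {E : Type} [Field E]

/-- `g ∈ G^j(E) = {g ∈ GL_n(E) : gᵀ j g = j}` (orthogonal case). -/
def Gj {n : ℕ} (j g : Matrix (Fin n) (Fin n) E) : Prop :=
  IsUnit g ∧ gᵀ * j * g = j

/-- `x ∈ X^j = {x ∈ G^j(E) : x·σ(x) = 1}`. -/
def Xj {n : ℕ} (σ : E → E) (j x : Matrix (Fin n) (Fin n) E) : Prop :=
  Gj j x ∧ x * x.map σ = 1

/-- `x ∈ SX^j = X^j ∩ SL_n(E)`. -/
def SXj {n : ℕ} (σ : E → E) (j x : Matrix (Fin n) (Fin n) E) : Prop :=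
  Xj σ j x ∧ x.det = 1

/-- `x'` lies in the `SG^j(E) = G^j(E) ∩ SL_n(E)`-orbit of `x` for twisted conjugation. -/
def orbSG {n : ℕ} (σ : E → E) (j x x' : Matrix (Fin n) (Fin n) E) : Prop :=
  ∃ g, Gj j g ∧ g.det = 1 ∧ x' = g * x * (g.map σ)⁻¹

/-- `y'` lies in the `GL_n(F)`-orbit of `y`, `F` being the fixed field of `σ`. -/
def orbYF {n : ℕ} (σ : E → E) (y y' : Matrix (Fin n) (Fin n) E) : Prop :=
  ∃ g, (IsUnit g ∧ ∀ a b, σ (g a b) = g a b) ∧ y' = gᵀ * y * g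

end OrthPair

open OrthPair

namespace OrthPair

section aux
variable {E : Type} [Field E] {n : ℕ}

lemma eq_iff_aux (S : Matrix (Fin n) (Fin n) E →+* Matrix (Fin n) (Fin n) E)
    {x z : Matrix (Fin n) (Fin n) E} (hz : IsUnit z) :
    x = z * (S z)⁻¹ ↔ x * S z = z := by
  have h := (Matrix.isUnit_iff_isUnit_det _).1 (hz.map S)
  constructor
  · rintro rfl
    rw [Matrix.mul_assoc, Matrix.nonsing_inv_mul _ h, Matrix.mul_one]
  · intro hx
    calc x = x * S z * (S z)⁻¹ := by rw [Matrix.mul_assoc, Matrix.mul_nonsing_inv _ h, Matrix.mul_one]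
      _ = _ := by rw [hx]

lemma refl_exists (σ : E →+* E) (h2 : (2 : E) ≠ 0) (hn : 1 ≤ n)
    (y : Matrix (Fin n) (Fin n) E) (hyU : IsUnit y) (hys : yᵀ = y)
    (hyF : ∀ a b, σ (y a b) = y a b) :
    ∃ r : Matrix (Fin n) (Fin n) E, (∀ a b, σ (r a b) = r a b) ∧ rᵀ * y * r = y ∧ r.det = -1 := by
  have hv : ∃ v : Fin n → E, (∀ a, σ (v a) = v a) ∧ v ⬝ᵥ (y *ᵥ v) ≠ 0 := by
    by_cases hd : ∃ a, y a a ≠ 0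
    · obtain ⟨a, ha⟩ := hd
      refine ⟨Pi.single a 1, fun b => ?_, by simpa using ha⟩
      by_cases h : b = a
      · subst h; simp
      · simp [h]
    · push Not at hd
      have : ∃ a b, y a b ≠ 0 := by
        by_contra! hc
        have h0 : y = 0 := by ext a b; exact hc a b
        have hdet := (Matrix.isUnit_iff_isUnit_det _).1 hyU
        haveI : Nonempty (Fin n) := ⟨⟨0, hn⟩⟩
        rw [h0, Matrix.det_zero] at hdet
        exact not_isUnit_zero hdet
      obtain ⟨a, b, hab⟩ := this
      refine ⟨Pi.single a 1 + Pi.single b 1, fun c => ?_, ?_⟩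
      · simp only [Pi.add_apply, map_add]
        congr 1
        · by_cases h : c = a
          · subst h; simp
          · simp [h]
        · by_cases h : c = b
          · subst h; simp
          · simp [h]
      · have hba : y b a = y a b := by
          conv_lhs => rw [← hys]
          rfl
        have : (Pi.single a 1 + Pi.single b 1 : Fin n → E) ⬝ᵥ (y *ᵥ (Pi.single a 1 + Pi.single b 1))
            = 2 * y a b := by
          simp [Matrix.mulVec_add, hd, hba]
          ring
        rw [this]
        exact mul_ne_zero h2 hab
  obtain ⟨v, hvF, hv0⟩ := hv
  set q := v ⬝ᵥ (y *ᵥ v) with hq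
  set w := y *ᵥ v with hw
  have hwF : ∀ a, σ (w a) = w a := by
    intro a
    simp [hw, Matrix.mulVec, dotProduct, map_sum, hyF, hvF]
  have hqF : σ q = q := by
    simp [hq, dotProduct, map_sum, hwF, hvF]
  have hyv : y * vecMulVec v w = vecMulVec w w := by
    rw [Matrix.mul_vecMulVec]
  have hvy : vecMulVec w v * y = vecMulVec w w := by
    rw [Matrix.vecMulVec_mul]
    congr 1
    rw [hw, ← Matrix.mulVec_transpose, hys]
  refine ⟨1 - (2 / q) • vecMulVec v w, ?_, ?_, ?_⟩
  · intro a b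
    simp only [Matrix.sub_apply, Matrix.smul_apply, vecMulVec_apply, smul_eq_mul, map_sub, map_mul,
      map_div₀, hqF, hvF, hwF, map_ofNat]
    congr 1
    by_cases h : a = b
    · subst h; simp
    · simp [h]
  · have hc : vecMulVec w v * vecMulVec w w = q • vecMulVec w w := by
      rw [Matrix.vecMulVec_mul_vecMulVec]
      ext a b
      simp [vecMulVec_apply, hq]
      try ring
    rw [Matrix.transpose_sub, Matrix.transpose_one, Matrix.transpose_smul, Matrix.transpose_vecMulVec]
    have : (1 - (2 / q) • vecMulVec w v) * y * (1 - (2 / q) • vecMulVec v w)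
      = y - (2/q) • (vecMulVec w v * y) - (2/q) • (y * vecMulVec v w)
        + ((2/q) * (2/q)) • (vecMulVec w v * (y * vecMulVec v w)) := by
      simp only [sub_mul, mul_sub, one_mul, mul_one, smul_mul_assoc, mul_smul_comm, smul_sub, smul_smul, Matrix.mul_assoc]
      abel
    rw [this, hyv, hvy, hc, smul_smul, sub_sub, ← add_smul]
    have : 2 / q * (2/q) * q = 2/q + 2/q := by field_simp; norm_num
    rw [this]; abel
  · have : (1 - (2 / q) • vecMulVec v w) = 1 + replicateCol Unit (-(2/q) • v) * replicateRow Unit w := by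
      ext a b
      simp [vecMulVec_apply, Matrix.mul_apply]
      ring
    rw [this, Matrix.det_one_add_replicateCol_mul_replicateRow]
    rw [dotProduct_smul, dotProduct_comm, ← hq, smul_eq_mul]
    field_simp
    norm_num

lemma hilb90 [CharZero E] {K : Type} [Field K] [Infinite K] [Algebra K E]
    (σ : E ≃ₐ[K] E) (ι : E) (hι0 : ι ≠ 0) (hι : σ ι = -ι)
    (x : Matrix (Fin n) (Fin n) E) (hx : x * x.map σ = 1) :
    ∃ z, IsUnit z ∧ x * z.map σ = z := by
  let S : Matrix (Fin n) (Fin n) E →+* Matrix (Fin n) (Fin n) E := (σ : E →+* E).mapMatrix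
  have hsm : ∀ (c : E) z, S (c • z) = σ c • S z := by
    intro c z; ext a b; simp [S]
  let P : Polynomial E := Matrix.det
    ((Polynomial.X : Polynomial E) • (1 + x).map Polynomial.C + (ι • (1 - x)).map Polynomial.C)
  have hP : ∀ t : E, P.eval t = (t • (1 + x) + ι • (1 - x)).det := by
    intro t
    have := RingHom.map_det (Polynomial.evalRingHom t)
      ((Polynomial.X : Polynomial E) • (1 + x).map Polynomial.C + (ι • (1 - x)).map Polynomial.C)
    refine this.trans ?_
    congr 1
    ext a b
    simp
    ring
  have hP0 : P ≠ 0 := by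
    intro h0
    have := hP ι
    rw [h0, Polynomial.eval_zero, ← smul_add, add_add_sub_cancel, ← two_smul E, smul_smul,
      Matrix.det_smul, Matrix.det_one, mul_one] at this
    exact pow_ne_zero _ (mul_ne_zero hι0 two_ne_zero) this.symm
  have ht : ∃ t : K, P.eval (algebraMap K E t) ≠ 0 := by
    by_contra! hc
    apply hP0
    apply Polynomial.eq_zero_of_infinite_isRoot
    refine (Set.infinite_range_of_injective (algebraMap K E).injective).mono ?_
    rintro _ ⟨t, rfl⟩
    exact hc t
  obtain ⟨t, ht⟩ := ht
  rw [hP] at ht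
  refine ⟨_, (Matrix.isUnit_iff_isUnit_det _).2 (isUnit_iff_ne_zero.2 ht), ?_⟩
  change x * S _ = _
  have hx' : x * S x = 1 := hx
  rw [map_add, hsm, hsm, map_add, map_sub, map_one, hι, AlgEquiv.commutes, mul_add, mul_smul_comm,
    mul_smul_comm, mul_add, mul_sub, hx', mul_one, neg_smul, ← smul_neg, neg_sub, add_comm x 1]

variable (S : Matrix (Fin n) (Fin n) E →+* Matrix (Fin n) (Fin n) E) (σ : E →+* E)
  (hSS : ∀ z, S (S z) = z) (hSt : ∀ z, S zᵀ = (S z)ᵀ) (hSd : ∀ z, (S z).det = σ z.det)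
  (j : Matrix (Fin n) (Fin n) E) (hj : S j = j) (hjU : IsUnit j)

include hSt hj in
lemma wd {x z : Matrix (Fin n) (Fin n) E} (hx : xᵀ * j * x = j) (h : x * S z = z) :
    S (zᵀ * j * z) = zᵀ * j * z := by
  rw [map_mul, map_mul, hSt, hj]
  conv_rhs => rw [← h]
  rw [Matrix.transpose_mul]
  conv_lhs => rw [← hx]
  simp only [Matrix.mul_assoc]

include hSS hSt hj in
lemma surj {z x : Matrix (Fin n) (Fin n) E} (hz : IsUnit z) (h : S (zᵀ * j * z) = zᵀ * j * z)
    (hx : x * S z = z) : (IsUnit x ∧ xᵀ * j * x = j) ∧ x * S x = 1 := by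
  have hSz : IsUnit (S z) := hz.map S
  have hxu : IsUnit x := by
    rw [Matrix.isUnit_iff_isUnit_det] at hz ⊢
    rw [← hx, Matrix.det_mul] at hz
    exact isUnit_of_mul_isUnit_left hz
  refine ⟨⟨hxu, ?_⟩, ?_⟩
  · have hT : IsUnit (S z)ᵀ := by
      rw [Matrix.isUnit_iff_isUnit_det, Matrix.det_transpose, ← Matrix.isUnit_iff_isUnit_det]
      exact hSz
    rw [map_mul, map_mul, hSt, hj] at h
    apply hT.mul_left_cancel
    apply hSz.mul_right_cancel
    rw [h]
    conv_rhs => rw [← hx]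
    rw [Matrix.transpose_mul]
    simp only [Matrix.mul_assoc]
  · apply hz.mul_right_cancel
    rw [one_mul, Matrix.mul_assoc]
    have : S x * z = S z := by rw [← hSS z, ← map_mul, hx, hSS]
    rw [this, hx]

include hSt hj hSd hjU in
lemma inj (hSe : ∀ z, S z = z ↔ ∀ a b, σ (z a b) = z a b) (hjs : jᵀ = j)
    (h2 : (2 : E) ≠ 0) (hn : 1 ≤ n)
    {x x' z z' : Matrix (Fin n) (Fin n) E} (hz : IsUnit z) (hz' : IsUnit z')
    (hxj : xᵀ * j * x = j)
    (hx : x * S z = z) (hx' : x' * S z' = z') :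
    (∃ g, (IsUnit g ∧ gᵀ * j * g = j) ∧ g.det = 1 ∧ x' = g * x * (S g)⁻¹) ↔
    (∃ g, (IsUnit g ∧ ∀ a b, σ (g a b) = g a b) ∧ z'ᵀ * j * z' = gᵀ * (zᵀ * j * z) * g) := by
  have hcr : ∀ g : Matrix (Fin n) (Fin n) E, IsUnit g →
      (x' = g * x * (S g)⁻¹ ↔ x' * S g = g * x) := by
    intro g hg
    have h := (Matrix.isUnit_iff_isUnit_det _).1 (hg.map S)
    constructor
    · rintro rfl
      rw [Matrix.mul_assoc, Matrix.nonsing_inv_mul _ h, Matrix.mul_one]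
    · intro hx
      rw [← hx, Matrix.mul_assoc, Matrix.mul_nonsing_inv _ h, Matrix.mul_one]
  constructor
  · rintro ⟨g, ⟨hgU, hgj⟩, -, hg⟩
    rw [hcr g hgU] at hg
    have hgz : IsUnit (g * z) := hgU.mul hz
    obtain ⟨u, hu⟩ := hgz
    have key : x' * S (g * z) = g * z := by
      rw [map_mul, ← Matrix.mul_assoc, hg, Matrix.mul_assoc, hx]
    have hxU' : IsUnit x' := by
      rw [Matrix.isUnit_iff_isUnit_det] at hz' ⊢
      rw [← hx', Matrix.det_mul] at hz'
      exact isUnit_of_mul_isUnit_left hz'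
    let h := (↑u⁻¹ : Matrix (Fin n) (Fin n) E) * z'
    have hh : g * z * h = z' := by
      rw [← hu]; exact u.mul_inv_cancel_left z'
    refine ⟨h, ⟨u⁻¹.isUnit.mul hz', (hSe h).1 ?_⟩, ?_⟩
    · apply (u.isUnit).mul_left_cancel
      rw [hu, hh]
      calc g * z * S h = x' * S (g * z) * S h := by rw [key]
        _ = x' * S z' := by rw [Matrix.mul_assoc, ← map_mul, hh]
        _ = z' := hx'
    · rw [← hh]
      simp only [Matrix.transpose_mul]
      conv_rhs => rw [← hgj]
      simp only [Matrix.mul_assoc]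
  · rintro ⟨h0, ⟨h0U, h0F⟩, h0e⟩
    have main : ∀ h : Matrix (Fin n) (Fin n) E, IsUnit h → (∀ a b, σ (h a b) = h a b) →
        z'ᵀ * j * z' = hᵀ * (zᵀ * j * z) * h → 
        ∃ g, (IsUnit g ∧ gᵀ * j * g = j) ∧ g * (z * h) = z' ∧ x' = g * x * (S g)⁻¹ := by
      intro h hU hF he
      have hzh : IsUnit (z * h) := hz.mul hU
      obtain ⟨u, hu⟩ := hzh
      let g := z' * (↑u⁻¹ : Matrix (Fin n) (Fin n) E)
      have hgU : IsUnit g := hz'.mul u⁻¹.isUnit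
      have hg : g * (z * h) = z' := by rw [← hu]; exact u.inv_mul_cancel_right z'
      refine ⟨g, ⟨hgU, ?_⟩, hg, ?_⟩
      · have hT : IsUnit (z * h)ᵀ := by
          rw [Matrix.isUnit_iff_isUnit_det, Matrix.det_transpose, ← Matrix.isUnit_iff_isUnit_det]
          exact hz.mul hU
        apply hT.mul_left_cancel
        apply (hz.mul hU).mul_right_cancel
        have e1 : (z * h)ᵀ * (gᵀ * j * g) * (z * h) = z'ᵀ * j * z' := by
          rw [← hg]; simp only [Matrix.transpose_mul, Matrix.mul_assoc]
        rw [e1, he]; simp only [Matrix.transpose_mul, Matrix.mul_assoc]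
      · rw [hcr g hgU]
        have hSh : S h = h := (hSe h).2 hF
        have e1 : x' * S g * S (z * h) = z' := by
          rw [Matrix.mul_assoc, ← map_mul, hg, hx']
        have e2 : g * x * S (z * h) = z' := by
          rw [map_mul, hSh, Matrix.mul_assoc, ← Matrix.mul_assoc x, hx, hg]
        exact ((hz.mul hU).map S).mul_right_cancel (e1.trans e2.symm)
    obtain ⟨g, ⟨hgU, hgj⟩, hgz, hgx⟩ := main h0 h0U h0F h0e
    have hd : g.det = 1 ∨ g.det = -1 := by
      have := congrArg Matrix.det hgj
      rw [Matrix.det_mul, Matrix.det_mul, Matrix.det_transpose] at this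
      have hj0 : j.det ≠ 0 := ((Matrix.isUnit_iff_isUnit_det _).1 hjU).ne_zero
      have : g.det * g.det = 1 := by
        apply mul_right_cancel₀ hj0; linear_combination this
      exact mul_self_eq_one_iff.1 this
    rcases hd with hd | hd
    · exact ⟨g, ⟨hgU, hgj⟩, hd, hgx⟩
    have hyU : IsUnit (zᵀ * j * z) := by
      rw [Matrix.isUnit_iff_isUnit_det] at hz hjU ⊢
      rw [Matrix.det_mul, Matrix.det_mul, Matrix.det_transpose]
      exact (hz.mul hjU).mul hz
    obtain ⟨r, hrF, hry, hrd⟩ := refl_exists σ h2 hn (zᵀ * j * z) hyU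
      (by simp only [Matrix.transpose_mul, Matrix.transpose_transpose, hjs, Matrix.mul_assoc])
      ((hSe _).1 (wd S hSt j hj hxj hx))
    have hrU : IsUnit r := by
      rw [Matrix.isUnit_iff_isUnit_det, hrd]; exact isUnit_one.neg
    obtain ⟨g', hg', hgz', hgx'⟩ := main (r * h0) (hrU.mul h0U)
      ((hSe _).1 (by rw [map_mul, (hSe _).2 hrF, (hSe _).2 h0F]))
      (by rw [h0e]
          conv_lhs => rw [← hry]
          simp only [Matrix.transpose_mul, Matrix.mul_assoc])
    refine ⟨g', hg', ?_, hgx'⟩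
    have e := congrArg Matrix.det (hgz'.trans hgz.symm)
    simp only [Matrix.det_mul, hrd, hd] at e
    have hz0 := ((Matrix.isUnit_iff_isUnit_det _).1 hz).ne_zero
    have hh0 := ((Matrix.isUnit_iff_isUnit_det _).1 h0U).ne_zero
    apply mul_right_cancel₀ (mul_ne_zero hz0 hh0)
    linear_combination -e

end aux

end OrthPair

/-- In the orthogonal case, the orbit correspondence sending `G^j(E)·x` to
`(zᵀ j z) ⋆ GL_n(F)`, where `x = z·σ(z)⁻¹`, restricts to (i) a bijection between the
`SG^j(E)`-orbits in `SX^j` and the `GL_n(F)`-orbits in `(j ⋆ GL_n^F(E)) ∩ Y_n(F)`, and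
(ii) a bijection between the `SG^j(E)`-orbits in `X^j \ SX^j` and the `GL_n(F)`-orbits in
`(j ⋆ GL_n^{ιF}(E)) ∩ Y_n(F)`.  Here `GL_n^F(E)` (resp. `GL_n^{ιF}(E)`) is the set of
`g ∈ GL_n(E)` with `det g ∈ F^×` (resp. `det g ∈ ι·F^×`), `F` being the fixed field of
`σ`. -/
theorem stmt_9 (p : ℕ) [Fact p.Prime]
    (E : Type) [Field E] [Algebra ℚ_[p] E] [FiniteDimensional ℚ_[p] E]
    (σ : E ≃ₐ[ℚ_[p]] E) (hσ1 : σ ≠ 1) (hσ2 : σ * σ = 1)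
    (ι : E) (hι1 : σ ι ≠ ι) (hι2 : σ (ι * ι) = ι * ι)
    (n : ℕ) (hn : 1 ≤ n)
    (j : Matrix (Fin n) (Fin n) E)
    (hjF : ∀ a b, σ (j a b) = j a b) (hjU : IsUnit j) (hjsym : jᵀ = j) :
    -- every x ∈ X^j is of the form z·σ(z)⁻¹
    (∀ x, Xj ⇑σ j x → ∃ z, IsUnit z ∧ x = z * (z.map ⇑σ)⁻¹) ∧
    -- (i) well-definedness: for x ∈ SX^j the image lies in (j ⋆ GL_n^F(E)) ∩ Y_n(F)
    (∀ x z, SXj ⇑σ j x → IsUnit z → x = z * (z.map ⇑σ)⁻¹ →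
      σ z.det = z.det ∧ (∀ a b, σ ((zᵀ * j * z) a b) = (zᵀ * j * z) a b)) ∧
    -- (i) injectivity on orbits
    (∀ x x' z z', SXj ⇑σ j x → SXj ⇑σ j x' → IsUnit z → IsUnit z' →
      x = z * (z.map ⇑σ)⁻¹ → x' = z' * (z'.map ⇑σ)⁻¹ →
      (orbSG ⇑σ j x x' ↔ orbYF ⇑σ (zᵀ * j * z) (z'ᵀ * j * z'))) ∧
    -- (i) surjectivity
    (∀ y, (∃ g, IsUnit g ∧ σ g.det = g.det ∧ y = gᵀ * j * g) →
      IsUnit y → yᵀ = y → (∀ a b, σ (y a b) = y a b) →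
      ∃ z, IsUnit z ∧ y = zᵀ * j * z ∧ SXj ⇑σ j (z * (z.map ⇑σ)⁻¹)) ∧
    -- (ii) well-definedness: for x ∈ X^j \ SX^j the image lies in (j ⋆ GL_n^{ιF}(E)) ∩ Y_n(F)
    (∀ x z, Xj ⇑σ j x → x.det ≠ 1 → IsUnit z → x = z * (z.map ⇑σ)⁻¹ →
      (∃ c, σ c = c ∧ c ≠ 0 ∧ z.det = ι * c) ∧
      (∀ a b, σ ((zᵀ * j * z) a b) = (zᵀ * j * z) a b)) ∧
    -- (ii) injectivity on orbits
    (∀ x x' z z', Xj ⇑σ j x → x.det ≠ 1 → Xj ⇑σ j x' → x'.det ≠ 1 →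
      IsUnit z → IsUnit z' →
      x = z * (z.map ⇑σ)⁻¹ → x' = z' * (z'.map ⇑σ)⁻¹ →
      (orbSG ⇑σ j x x' ↔ orbYF ⇑σ (zᵀ * j * z) (z'ᵀ * j * z'))) ∧
    -- (ii) surjectivity
    (∀ y, (∃ g, IsUnit g ∧ (∃ c, σ c = c ∧ c ≠ 0 ∧ g.det = ι * c) ∧ y = gᵀ * j * g) →
      IsUnit y → yᵀ = y → (∀ a b, σ (y a b) = y a b) →
      ∃ z, IsUnit z ∧ y = zᵀ * j * z ∧
        Xj ⇑σ j (z * (z.map ⇑σ)⁻¹) ∧ (z * (z.map ⇑σ)⁻¹).det ≠ 1) := by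
  haveI : CharZero E := charZero_of_injective_algebraMap (algebraMap ℚ_[p] E).injective
  have hss : ∀ a, σ (σ a) = a := fun a => by
    have := congrArg (fun f : E ≃ₐ[ℚ_[p]] E => f a) hσ2
    simpa using this
  have hιn : σ ι = -ι := by
    rw [map_mul] at hι2
    exact (mul_self_eq_mul_self_iff.1 hι2).resolve_left hι1
  have hι0 : ι ≠ 0 := by
    rintro rfl; simp at hι1
  let S : Matrix (Fin n) (Fin n) E →+* Matrix (Fin n) (Fin n) E := (σ : E →+* E).mapMatrix
  have hSS : ∀ z, S (S z) = z := fun z => by ext a b; exact hss _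
  have hSt : ∀ z, S zᵀ = (S z)ᵀ := fun z => rfl
  have hSd : ∀ z, (S z).det = (σ : E →+* E) z.det := fun z => (RingHom.map_det _ z).symm
  have hSe : ∀ z, S z = z ↔ ∀ a b, (σ : E →+* E) (z a b) = z a b := fun z =>
    ⟨fun h a b => congrFun (congrFun h a) b, fun h => by ext a b; exact h a b⟩
  have hj : S j = j := (hSe j).2 hjF
  have h2 : (2 : E) ≠ 0 := two_ne_zero
  have hdet : ∀ x z, x * S z = z → x.det * σ z.det = z.det := fun x z h => by
    conv_rhs => rw [← h]
    rw [Matrix.det_mul, hSd]; rfl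
  have hd0 : ∀ z : Matrix (Fin n) (Fin n) E, IsUnit z → z.det ≠ 0 := fun z hz =>
    ((Matrix.isUnit_iff_isUnit_det _).1 hz).ne_zero
  have hinv : ∀ z, IsUnit z → z * (z.map ⇑σ)⁻¹ * S z = z := fun z hz => (eq_iff_aux S hz).1 rfl
  refine ⟨?_, ?_, ?_, ?_, ?_, ?_, ?_⟩
  · rintro x ⟨-, hx⟩
    obtain ⟨z, hz, h⟩ := hilb90 σ ι hι0 hιn x hx
    exact ⟨z, hz, (eq_iff_aux S hz).2 h⟩
  · rintro x z ⟨⟨⟨-, hxj⟩, -⟩, hx1⟩ hz h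
    have h := (eq_iff_aux S hz).1 h
    refine ⟨?_, (hSe _).1 (wd S hSt j hj hxj h)⟩
    have := hdet x z h
    rwa [hx1, one_mul] at this
  · rintro x x' z z' ⟨⟨⟨-, hxj⟩, -⟩, hx1⟩ - hz hz' h h'
    exact inj S σ hSt hSd j hj hjU hSe hjsym h2 hn hz hz' hxj
      ((eq_iff_aux S hz).1 h) ((eq_iff_aux S hz').1 h')
  · rintro y ⟨z, hz, hzd, rfl⟩ - - hy
    refine ⟨z, hz, rfl, surj S hSS hSt j hj hz ((hSe _).2 hy) (hinv z hz), ?_⟩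
    have := hdet _ _ (hinv z hz)
    rw [hzd] at this
    exact mul_right_cancel₀ (hd0 z hz) (this.trans (one_mul _).symm)
  · rintro x z ⟨⟨-, hxj⟩, -⟩ hx1 hz h
    have h := (eq_iff_aux S hz).1 h
    refine ⟨?_, (hSe _).1 (wd S hSt j hj hxj h)⟩
    have hd := hdet x z h
    have hxd : x.det = -1 := by
      have := congrArg Matrix.det hxj
      rw [Matrix.det_mul, Matrix.det_mul, Matrix.det_transpose] at this
      have : x.det * x.det = 1 := by
        apply mul_right_cancel₀ (hd0 j hjU); linear_combination this
      exact (mul_self_eq_one_iff.1 this).resolve_left hx1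
    rw [hxd] at hd
    refine ⟨z.det / ι, ?_, div_ne_zero (hd0 z hz) hι0, by field_simp⟩
    have hd' : σ z.det = -z.det := by linear_combination -hd
    rw [map_div₀, hιn, hd', neg_div_neg_eq]
  · rintro x x' z z' ⟨⟨-, hxj⟩, -⟩ hx1 - - hz hz' h h'
    exact inj S σ hSt hSd j hj hjU hSe hjsym h2 hn hz hz' hxj
      ((eq_iff_aux S hz).1 h) ((eq_iff_aux S hz').1 h')
  · rintro y ⟨z, hz, ⟨c, hc, hc0, hzd⟩, rfl⟩ - - hy
    refine ⟨z, hz, rfl, surj S hSS hSt j hj hz ((hSe _).2 hy) (hinv z hz), ?_⟩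
    intro h1
    have := hdet _ _ (hinv z hz)
    rw [h1, one_mul, hzd, map_mul, hc] at this
    exact hι1 (mul_right_cancel₀ hc0 this)
end

section
/- In the orthogonal case, each of SX^j and X^j \ SX^j contains at most two SG^j(E)-orbits. Moreover, for n = 2: if det j ∈ -F^{×2} then SX^j is a single SG^j(E)-orbit, and if det j ∈ -ı²·F^{×2} then X^j \ SX^j is a single SG^j(E)-orbit. -/
open Matrix

open OrthPair


namespace OrthAux

section normed
variable {K : Type*} [NormedField K] [IsUltrametricDist K]

def ball (c : K) : AddSubgroup K where
  carrier := {x | ‖x‖ ≤ ‖c‖}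
  add_mem' {a b} ha hb := (IsUltrametricDist.norm_add_le_max a b).trans (max_le ha hb)
  zero_mem' := by simp
  neg_mem' := by simp

theorem mem_ball {c x : K} : x ∈ ball c ↔ ‖x‖ ≤ ‖c‖ := Iff.rfl

theorem norm_of_near_one {c x : K} (hc : ‖c‖ < 1) (hx : ‖x - 1‖ ≤ ‖c‖) : ‖x‖ = 1 := by
  have h : ‖x - 1‖ < ‖(1:K)‖ := by simpa using hx.trans_lt hc
  have := IsUltrametricDist.norm_add_eq_max_of_norm_ne_norm (x := x - 1) (y := 1) h.ne
  rw [sub_add_cancel] at this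
  rw [this, max_eq_right h.le, norm_one]

/-- principal units -/
def PU (c : K) (hc : ‖c‖ < 1) : Subgroup Kˣ where
  carrier := {x | ‖(x:K) - 1‖ ≤ ‖c‖}
  one_mem' := by simp
  mul_mem' {a b} ha hb := by
    have e : ((a * b : Kˣ) : K) - 1 = (a:K) * (b - 1) + (a - 1) := by push_cast; ring
    change ‖((a * b : Kˣ) : K) - 1‖ ≤ ‖c‖
    rw [e]
    refine (IsUltrametricDist.norm_add_le_max _ _).trans (max_le ?_ ha)
    rw [norm_mul, norm_of_near_one hc ha, one_mul]
    exact hb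
  inv_mem' {a} ha := by
    have e : ((a⁻¹ : Kˣ) : K) - 1 = - (((a⁻¹ : Kˣ) : K) * (a - 1)) := by
      rw [mul_sub, Units.inv_mul]; ring
    change ‖((a⁻¹ : Kˣ) : K) - 1‖ ≤ ‖c‖
    rw [e, norm_neg, norm_mul, Units.val_inv_eq_inv_val, norm_inv, norm_of_near_one hc ha]
    simpa using ha

theorem mem_PU {c : K} {hc : ‖c‖ < 1} {x : Kˣ} : x ∈ PU c hc ↔ ‖(x:K) - 1‖ ≤ ‖c‖ := Iff.rfl

variable (K) in
def UU : Subgroup Kˣ where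
  carrier := {x | ‖(x:K)‖ = 1}
  one_mem' := by simp
  mul_mem' {a b} ha hb := by
    change ‖((a * b : Kˣ) : K)‖ = 1
    have ha : ‖(a:K)‖ = 1 := ha
    have hb : ‖(b:K)‖ = 1 := hb
    simp [ha, hb]
  inv_mem' {a} ha := by
    have ha : ‖(a:K)‖ = 1 := ha
    change ‖((a⁻¹ : Kˣ) : K)‖ = 1
    simp [ha]

theorem mem_UU {x : Kˣ} : x ∈ UU K ↔ ‖(x:K)‖ = 1 := Iff.rfl

/-- Hensel: solve u² + u = w for small w -/
theorem hensel_quad [CompleteSpace K] (w : K) (hw : ‖w‖ < 1) :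
    ∃ u : K, u * u + u = w ∧ ‖u‖ ≤ ‖w‖ := by
  let s : Set K := Metric.closedBall 0 ‖w‖
  have hs : IsComplete s := Metric.isClosed_closedBall.isComplete
  have hmem : ∀ x, x ∈ s ↔ ‖x‖ ≤ ‖w‖ := by intro x; simp [s]
  let f : K → K := fun u => w - u * u
  have hm : Set.MapsTo f s s := by
    intro u hu
    rw [hmem] at *
    change ‖w - u * u‖ ≤ ‖w‖
    rw [sub_eq_add_neg]
    refine (IsUltrametricDist.norm_add_le_max _ _).trans (max_le le_rfl ?_)
    rw [norm_neg, norm_mul]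
    nlinarith [norm_nonneg u, norm_nonneg w]
  have hc : ContractingWith ‖w‖₊ (hm.restrict f s s) := by
    refine ⟨by exact_mod_cast hw, LipschitzWith.of_dist_le_mul ?_⟩
    rintro ⟨x, hx⟩ ⟨y, hy⟩
    rw [hmem] at hx hy
    simp only [Subtype.dist_eq, Set.MapsTo.val_restrict_apply, f, dist_eq_norm]
    have : w - x * x - (w - y * y) = -(x + y) * (x - y) := by ring
    rw [this, norm_mul, norm_neg]
    refine mul_le_mul_of_nonneg_right ?_ (norm_nonneg _)
    exact (IsUltrametricDist.norm_add_le_max _ _).trans (max_le hx hy)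
  have h0 : (0:K) ∈ s := by rw [hmem]; simp
  obtain ⟨u, hu, hfix, -⟩ := hc.exists_fixedPoint' hs hm h0 (edist_ne_top _ _)
  refine ⟨u, ?_, (hmem u).1 hu⟩
  have : w - u * u = u := hfix
  linear_combination -this

variable (K) in
abbrev sq : Kˣ →* Kˣ := powMonoidHom 2

theorem map_sq_PU [CompleteSpace K] (P : K) (h2 : (2:K) ≠ 0) (h2' : ‖(2:K)‖ ≤ 1)
    (hP : ‖P‖ < 1) (h1 : ‖2 * P‖ < 1) (h4 : ‖4 * P‖ < 1) :
    (PU (2 * P) h1).map (sq K) = PU (4 * P) h4 := by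
  have e4 : (4:K) = 2 * 2 := by norm_num
  have n2 : 0 < ‖(2:K)‖ := norm_pos_iff.2 h2
  ext x
  constructor
  · rintro ⟨y, hy, rfl⟩
    have hy : ‖(y:K) - 1‖ ≤ ‖2 * P‖ := hy
    rw [mem_PU]
    have e : ((sq K y : Kˣ) : K) - 1 = (y - 1) * (2 + (y - 1)) := by
      simp only [powMonoidHom_apply, Units.val_pow_eq_pow_val]; ring
    rw [e, norm_mul, e4, mul_assoc, norm_mul 2, mul_comm]
    have : ‖(2:K) + (y - 1)‖ ≤ ‖(2:K)‖ := by
      refine (IsUltrametricDist.norm_add_le_max _ _).trans (max_le le_rfl (hy.trans ?_))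
      rw [norm_mul]; nlinarith
    gcongr
  · intro hx
    rw [mem_PU] at hx
    obtain ⟨u, hu, hu'⟩ := hensel_quad (((x:K) - 1) / 4) (by
      rw [norm_div]
      have : 0 < ‖(4:K)‖ := by rw [e4, norm_mul]; positivity
      rw [div_lt_one this]
      refine hx.trans_lt ?_
      rw [norm_mul]; nlinarith)
    have n4 : 0 < ‖(4:K)‖ := by rw [e4, norm_mul]; positivity
    have n4' : (4:K) ≠ 0 := norm_pos_iff.1 n4
    have hu'' : ‖u‖ ≤ ‖P‖ := by
      refine hu'.trans ?_
      rw [norm_div, div_le_iff₀ n4]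
      rw [norm_mul] at hx; linarith
    have hx2 : (1 + 2 * u) * (1 + 2 * u) = x := by
      rw [eq_div_iff n4'] at hu
      linear_combination hu
    have hne : 1 + 2 * u ≠ 0 := by
      intro h; rw [h] at hx2; exact x.ne_zero (by simpa using hx2.symm)
    refine ⟨Units.mk0 _ hne, ?_, ?_⟩
    · change ‖(1 + 2 * u) - 1‖ ≤ _
      rw [add_sub_cancel_left, norm_mul, norm_mul]
      gcongr
    · ext
      simp only [powMonoidHom_apply, Units.val_pow_eq_pow_val, Units.val_mk0]
      rw [← hx2]; ring

/-- `[1+2P O : 1+4P O] = [O : 2 O]`. -/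
theorem relIndex_PU (P : K) (hP0 : P ≠ 0) (h2 : (2:K) ≠ 0) (h2' : ‖(2:K)‖ ≤ 1)
    (hP : ‖P‖ < 1) (h1 : ‖2 * P‖ < 1) (h4 : ‖4 * P‖ < 1) :
    (PU (4 * P) h4).relIndex (PU (2 * P) h1) = (ball (2:K)).relIndex (ball 1) := by
  have n2P : (2 * P) ≠ 0 := mul_ne_zero h2 hP0
  have n2P' : 0 < ‖2 * P‖ := norm_pos_iff.2 n2P
  have e4 : (4:K) = 2 * 2 := by norm_num
  let Q := (ball (1:K)) ⧸ (ball (2:K)).addSubgroupOf (ball 1)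
  have key : ∀ x : PU (2 * P) h1, ((((x:Kˣ):K) - 1) / (2 * P)) ∈ ball (1:K) := by
    rintro ⟨x, hx⟩
    rw [mem_ball, norm_div, norm_one, div_le_one n2P']
    exact hx
  let φ : PU (2 * P) h1 →* Multiplicative Q := MonoidHom.mk'
    (fun x => Multiplicative.ofAdd (QuotientAddGroup.mk ⟨_, key x⟩)) (by
      intro a b
      rw [← ofAdd_add, ← QuotientAddGroup.mk_add]
      congr 1
      rw [QuotientAddGroup.eq, AddSubgroup.mem_addSubgroupOf, mem_ball]
      have e : ((-(⟨_, key (a * b)⟩ : ball (1:K)) + (⟨_, key a⟩ + ⟨_, key b⟩) : ball (1:K)) : K)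
          = - ((2 * P) * (((((a:Kˣ):K) - 1) / (2 * P)) * ((((b:Kˣ):K) - 1) / (2 * P)))) := by
        simp only [AddSubgroup.coe_add, AddSubgroup.coe_neg, Subgroup.coe_mul, Units.val_mul]
        field_simp
        ring
      rw [e, norm_neg, norm_mul, norm_mul, norm_mul]
      have ha := key a
      have hb := key b
      rw [mem_ball, norm_one] at ha hb
      have h3 : ‖(2:K)‖ * ‖P‖ ≤ ‖(2:K)‖ := by nlinarith [norm_nonneg (2:K)]
      calc _ ≤ ‖(2:K)‖ * (1 * 1) := by gcongr
        _ = _ := by ring)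
  have hφ : Function.Surjective φ := by
    intro z
    obtain ⟨⟨a, ha⟩, ha'⟩ := QuotientAddGroup.mk_surjective (Multiplicative.toAdd z)
    rw [mem_ball, norm_one] at ha
    have hn : ‖(1 + 2 * P * a) - 1‖ ≤ ‖2 * P‖ := by
      rw [add_sub_cancel_left, norm_mul]; nlinarith
    have hne : 1 + 2 * P * a ≠ 0 := by
      intro h
      have := norm_of_near_one h1 hn
      rw [h] at this; simp at this
    refine ⟨⟨Units.mk0 _ hne, hn⟩, ?_⟩
    change Multiplicative.ofAdd _ = _
    rw [← ofAdd_toAdd z, ← ha']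
    congr 3
    simp only [Units.val_mk0, add_sub_cancel_left]
    field_simp
  have hker : φ.ker = (PU (4 * P) h4).subgroupOf (PU (2 * P) h1) := by
    ext x
    rw [MonoidHom.mem_ker, Subgroup.mem_subgroupOf, mem_PU]
    change Multiplicative.ofAdd _ = 1 ↔ _
    rw [← ofAdd_zero, Multiplicative.ofAdd.apply_eq_iff_eq, QuotientAddGroup.eq_zero_iff,
      AddSubgroup.mem_addSubgroupOf, mem_ball]
    simp only
    rw [norm_div, div_le_iff₀ n2P', ← norm_mul, e4, mul_assoc]
  rw [Subgroup.relIndex, ← hker, Subgroup.index_ker, MonoidHom.range_eq_top.2 hφ,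
    Subgroup.card_top]
  rfl

theorem relIndex_PU_ne_zero (c : K) (hc : ‖c‖ < 1) (h : (ball c).relIndex (ball (1:K)) ≠ 0) :
    (PU c hc).relIndex (UU K) ≠ 0 := by
  have : Finite (ball (1:K) ⧸ (ball c).addSubgroupOf (ball 1)) := by
    refine Nat.finite_of_card_ne_zero h
  have hmem : ∀ x : UU K, ((x:Kˣ):K) ∈ ball (1:K) := by
    rintro ⟨x, hx⟩; rw [mem_ball, norm_one]; exact le_of_eq hx
  have hrel : ∀ x y : UU K, (x⁻¹ * y ∈ (PU c hc).subgroupOf (UU K)) ↔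
      (-(⟨_, hmem x⟩ : ball (1:K)) + ⟨_, hmem y⟩ ∈ (ball c).addSubgroupOf (ball 1)) := by
    rintro ⟨x, hx⟩ ⟨y, hy⟩
    rw [mem_UU] at hx
    rw [Subgroup.mem_subgroupOf, AddSubgroup.mem_addSubgroupOf, mem_ball, mem_PU]
    have e : ((((⟨x, hx⟩ : UU K)⁻¹ * ⟨y, hy⟩ : UU K) : Kˣ) : K) - 1 = (x:K)⁻¹ * (-x + y) := by
      simp [mul_add]; ring
    rw [e, norm_mul, norm_inv, hx, inv_one, one_mul]
    rfl
  have : Finite (UU K ⧸ (PU c hc).subgroupOf (UU K)) := by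
    refine Finite.of_injective (β := ball (1:K) ⧸ (ball c).addSubgroupOf (ball 1))
      (Quotient.lift (fun x : UU K => QuotientAddGroup.mk ⟨_, hmem x⟩) ?_) ?_
    · intro a b hab
      rw [← Quotient.eq_iff_equiv] at hab
      have := QuotientGroup.eq.1 hab
      exact QuotientAddGroup.eq.2 ((hrel a b).1 this)
    · intro a b
      induction a using QuotientGroup.induction_on
      induction b using QuotientGroup.induction_on
      intro hab
      exact QuotientGroup.eq.2 ((hrel _ _).2 (QuotientAddGroup.eq.1 hab))
  exact Nat.card_pos.ne'

theorem index_sq_normed [CompleteSpace K] (P : K) (hP0 : P ≠ 0) (h2 : (2:K) ≠ 0)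
    (h2' : ‖(2:K)‖ ≤ 1) (hP : ‖P‖ < 1)
    (hfin : (ball (2 * P)).relIndex (ball (1:K)) ≠ 0)
    (π : K) (hπ0 : π ≠ 0) (hπ1 : ‖π‖ < 1) (hπ : ∀ x : K, x ≠ 0 → ∃ n : ℤ, ‖x‖ = ‖π‖ ^ n) :
    (sq K).range.index = 4 * (ball (2:K)).relIndex (ball 1) := by
  have n2 : 0 < ‖(2:K)‖ := norm_pos_iff.2 h2
  have h1 : ‖2 * P‖ < 1 := by rw [norm_mul]; nlinarith [norm_nonneg P]
  have h4 : ‖4 * P‖ < 1 := by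
    have e4 : (4:K) = 2 * 2 := by norm_num
    rw [e4, mul_assoc, norm_mul]; nlinarith [norm_nonneg (2*P)]
  set V := PU (2 * P) h1 with hV
  have hVU : V ≤ UU K := fun x hx => norm_of_near_one h1 hx
  have hkerm : ∀ x : Kˣ, x ∈ (sq K).ker ↔ x = 1 ∨ x = -1 := by
    intro x
    rw [MonoidHom.mem_ker, powMonoidHom_apply, Units.ext_iff, Units.ext_iff, Units.ext_iff]
    push_cast
    exact sq_eq_one_iff
  have hkU : (sq K).ker ≤ UU K := by
    intro x hx
    rcases (hkerm x).1 hx with rfl | rfl <;> simp [mem_UU]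
  have hneg : (-1 : Kˣ) ∉ V := by
    intro h
    have h : ‖((-1 : Kˣ) : K) - 1‖ ≤ ‖2 * P‖ := h
    have e : ((-1 : Kˣ) : K) - 1 = - 2 := by push_cast; ring
    rw [e, norm_neg, norm_mul] at h
    nlinarith
  have hVk : V.relIndex (V ⊔ (sq K).ker) = 2 := by
    rw [Subgroup.relIndex_eq_two_iff]
    refine ⟨-1, le_sup_right (a := V) ((hkerm _).2 (Or.inr rfl)), ?_⟩
    intro b hb
    obtain ⟨v, hv, k, hk, rfl⟩ := Subgroup.mem_sup.1 hb
    have hx : ∀ w ∈ V, -w ∉ V := by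
      intro w hw hw'
      apply hneg
      have := V.mul_mem hw' (V.inv_mem hw)
      simpa using this
    rcases (hkerm k).1 hk with rfl | rfl
    · right; simpa using ⟨hv, hx v hv⟩
    · left; simpa using ⟨hv, hx v hv⟩
  have hmap := map_sq_PU P h2 h2' hP h1 h4
  have h5 : (V.map (sq K)).relIndex V = (ball (2:K)).relIndex (ball 1) := by
    rw [hmap]; exact relIndex_PU P hP0 h2 h2' hP h1 h4
  have hW : V.relIndex (UU K) ≠ 0 := relIndex_PU_ne_zero _ _ hfin
  have hVkU : V ⊔ (sq K).ker ≤ UU K := sup_le hVU hkU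
  have m1 := Subgroup.relIndex_mul_relIndex V (V ⊔ (sq K).ker) (UU K) le_sup_left hVkU
  have hle1 : V.map (sq K) ≤ V := by
    rintro _ ⟨x, hx, rfl⟩
    exact V.pow_mem hx 2
  have hle2 : (UU K).map (sq K) ≤ UU K := by
    rintro _ ⟨x, hx, rfl⟩
    exact (UU K).pow_mem hx 2
  have m2 := Subgroup.relIndex_mul_relIndex _ V (UU K) hle1 hVU
  have m3 := Subgroup.relIndex_mul_relIndex (V.map (sq K)) _ (UU K) (Subgroup.map_mono hVU) hle2
  have m4 := Subgroup.relIndex_map_map (sq K) V (UU K)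
  rw [sup_of_le_left hkU] at m4
  have hsU : ((UU K).map (sq K)).relIndex (UU K) = 2 * (ball (2:K)).relIndex (ball 1) := by
    rw [hVk] at m1
    rw [h5] at m2
    rw [m4, ← m2, ← m1] at m3
    have hne : (V ⊔ (sq K).ker).relIndex (UU K) ≠ 0 := by
      intro h; rw [h] at m1; exact hW (by simpa using m1.symm)
    apply mul_left_cancel₀ hne
    rw [m3]; ring
  have hint : (sq K).range ⊓ UU K = (UU K).map (sq K) := by
    ext x
    constructor
    · rintro ⟨⟨y, rfl⟩, hy⟩
      refine ⟨y, ?_, rfl⟩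
      have hy : ‖((sq K y : Kˣ) : K)‖ = 1 := hy
      simp only [powMonoidHom_apply, Units.val_pow_eq_pow_val, norm_pow] at hy
      exact (pow_eq_one_iff_of_nonneg (norm_nonneg _) two_ne_zero).1 hy
    · intro hx
      exact ⟨Subgroup.map_le_range _ _ hx, hle2 hx⟩
  have hrel : (sq K).range.relIndex (UU K) = 2 * (ball (2:K)).relIndex (ball 1) := by
    rw [← hsU, ← hint, Subgroup.inf_relIndex_right]
  have htop : (UU K ⊔ (sq K).range).index = 2 := by
    rw [Subgroup.index_eq_two_iff]
    have n0 : 0 < ‖π‖ := norm_pos_iff.2 hπ0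
    have hmem : ∀ x : Kˣ, ∀ n : ℤ, ‖(x:K)‖ = ‖π‖ ^ (2 * n) → x ∈ UU K ⊔ (sq K).range := by
      intro x n hx
      have : x = (x * ((Units.mk0 π hπ0) ^ n)⁻¹ ^ 2) * (sq K ((Units.mk0 π hπ0) ^ n)) := by
        rw [powMonoidHom_apply]; simp
      rw [this]
      refine Subgroup.mul_mem_sup ?_ ⟨_, rfl⟩
      rw [mem_UU]
      simp only [Units.val_mul, Units.val_pow_eq_pow_val, Units.val_inv_eq_inv_val,
        Units.val_zpow_eq_zpow_val, Units.val_mk0, norm_mul, norm_pow, norm_inv, norm_zpow, hx]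
      rw [mul_comm 2 n, _root_.zpow_mul]
      have : ‖π‖ ^ n ≠ 0 := (zpow_pos n0 n).ne'
      field_simp
    have hnot : ∀ x : Kˣ, ∀ n : ℤ, ‖(x:K)‖ = ‖π‖ ^ (2 * n + 1) → x ∉ UU K ⊔ (sq K).range := by
      intro x n hx h
      obtain ⟨u, hu, _, ⟨y, rfl⟩, rfl⟩ := Subgroup.mem_sup.1 h
      rw [mem_UU] at hu
      obtain ⟨m, hm⟩ := hπ y y.ne_zero
      simp only [powMonoidHom_apply, Units.val_mul, Units.val_pow_eq_pow_val, norm_mul, hu, one_mul,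
        norm_pow, hm] at hx
      rw [← zpow_natCast, ← _root_.zpow_mul] at hx
      have := zpow_right_injective₀ n0 hπ1.ne hx
      push_cast at this
      omega
    refine ⟨Units.mk0 π hπ0, ?_⟩
    intro b
    obtain ⟨n, hn⟩ := hπ b b.ne_zero
    have hbn : ‖((b * Units.mk0 π hπ0 : Kˣ) : K)‖ = ‖π‖ ^ (n + 1) := by
      rw [zpow_add_one₀ n0.ne', ← hn]; simp
    rcases Int.even_or_odd' n with ⟨k, rfl | rfl⟩
    · right
      exact ⟨hmem _ _ hn, hnot _ _ hbn⟩
    · left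
      exact ⟨hmem _ (k + 1) (by rw [hbn]; congr 1; ring), hnot _ _ hn⟩
  have m5 := Subgroup.relIndex_mul_index (H := (sq K).range) (K := UU K ⊔ (sq K).range) le_sup_right
  rw [Subgroup.relIndex_sup_right, hrel, htop] at m5
  rw [← m5]; ring

end normed
end OrthAux

namespace OrthAux
open Polynomial

section padic
variable (p : ℕ) [Fact p.Prime]

theorem card_quot_ne_zero (a : ℤ_[p]) (ha : a ≠ 0) : Nat.card (ℤ_[p] ⧸ Ideal.span {a}) ≠ 0 := by
  have h : Ideal.span {a} ≠ ⊥ := by simpa using ha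
  obtain ⟨n, hn⟩ := PadicInt.ideal_eq_span_pow_p h
  rw [hn, ← PadicInt.ker_toZModPow]
  have : NeZero (p ^ n) := ⟨pow_ne_zero _ (Fact.out : p.Prime).ne_zero⟩
  have : Finite (ℤ_[p] ⧸ RingHom.ker (PadicInt.toZModPow (p := p) n)) :=
    Finite.of_injective _ (RingHom.kerLift_injective (PadicInt.toZModPow (p := p) n))
  exact Nat.card_pos.ne'

variable (K : Type) [NormedField K] [NormedAlgebra ℚ_[p] K] [FiniteDimensional ℚ_[p] K]
  [IsUltrametricDist K] [Algebra ℤ_[p] K] [IsScalarTower ℤ_[p] ℚ_[p] K]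

theorem mem_intClosure (x : K) : x ∈ integralClosure ℤ_[p] K ↔ ‖x‖ ≤ 1 := by
  have hx : IsIntegral ℚ_[p] x := Algebra.IsIntegral.isIntegral x
  rw [NormedAlgebra.norm_eq_spectralNorm ℚ_[p] x, mem_integralClosure_iff]
  unfold spectralNorm
  rw [spectralValue_le_one_iff (minpoly.monic hx)]
  constructor
  · intro h n
    rw [minpoly.isIntegrallyClosed_eq_field_fractions' ℚ_[p] h, coeff_map]
    exact PadicInt.norm_le_one _
  · intro h
    have : minpoly ℚ_[p] x ∈ lifts (algebraMap ℤ_[p] ℚ_[p]) := by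
      rw [lifts_iff_coeff_lifts]
      intro n
      exact ⟨⟨_, h n⟩, rfl⟩
    obtain ⟨q, hq, -, hqm⟩ := lifts_and_degree_eq_and_monic this (minpoly.monic hx)
    refine ⟨q, hqm, ?_⟩
    have h2 := minpoly.aeval ℚ_[p] x
    rw [← hq, aeval_def, eval₂_map, ← IsScalarTower.algebraMap_eq] at h2
    exact h2

theorem relIndex_ball (a : ℤ_[p]) (ha : a ≠ 0) :
    (ball (algebraMap ℤ_[p] K a)).relIndex (ball (1:K)) =
      Nat.card (ℤ_[p] ⧸ Ideal.span {a}) ^ Module.finrank ℚ_[p] K := by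
  have hinj : Function.Injective (algebraMap ℤ_[p] K) := by
    rw [IsScalarTower.algebraMap_eq ℤ_[p] ℚ_[p] K]
    exact (algebraMap ℚ_[p] K).injective.comp (IsFractionRing.injective ℤ_[p] ℚ_[p])
  have htf : Module.IsTorsionFree ℤ_[p] K := by
    have : FaithfulSMul ℤ_[p] K := (faithfulSMul_iff_algebraMap_injective _ _).2 hinj
    infer_instance
  have hfree : Module.Free ℤ_[p] (integralClosure ℤ_[p] K) :=
    IsIntegralClosure.module_free ℤ_[p] ℚ_[p] K _
  have hnoeth : IsNoetherian ℤ_[p] (integralClosure ℤ_[p] K) :=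
    IsIntegralClosure.isNoetherian ℤ_[p] ℚ_[p] K _
  have hrank := IsIntegralClosure.rank ℤ_[p] ℚ_[p] K (integralClosure ℤ_[p] K)
  let b := Module.finBasis ℤ_[p] (integralClosure ℤ_[p] K)
  let e := b.equivFun
  have ha' : algebraMap ℤ_[p] K a ≠ 0 := by
    rwa [Ne, map_eq_zero_iff _ hinj]
  have hm : ∀ x : ball (1:K), (x:K) ∈ integralClosure ℤ_[p] K := by
    rintro ⟨x, hx⟩
    rw [mem_intClosure]; simpa [mem_ball] using hx
  let ι' : ball (1:K) →+ integralClosure ℤ_[p] K := AddMonoidHom.mk' (fun x => ⟨x, hm x⟩)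
    (fun x y => rfl)
  let ψ : ball (1:K) →+ (Fin (Module.finrank ℤ_[p] (integralClosure ℤ_[p] K)) →
      ℤ_[p] ⧸ Ideal.span {a}) :=
    AddMonoidHom.mk' (fun x i => Ideal.Quotient.mk _ (e (ι' x) i)) (by
      intro x y; funext i; simp)
  have hψ : Function.Surjective ψ := by
    intro z
    choose w hw using fun i => Ideal.Quotient.mk_surjective (z i)
    refine ⟨⟨(e.symm w : integralClosure ℤ_[p] K), ?_⟩, ?_⟩
    · rw [mem_ball, norm_one, ← mem_intClosure p K]; exact (e.symm w).2
    · funext i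
      change Ideal.Quotient.mk _ (e (e.symm w) i) = _
      rw [LinearEquiv.apply_symm_apply, hw]
  have hker : ψ.ker = (ball (algebraMap ℤ_[p] K a)).addSubgroupOf (ball (1:K)) := by
    ext x
    rw [AddMonoidHom.mem_ker, AddSubgroup.mem_addSubgroupOf, mem_ball]
    have h1 : ψ x = 0 ↔ ∀ i, a ∣ e (ι' x) i := by
      rw [funext_iff]
      refine forall_congr' fun i => ?_
      change Ideal.Quotient.mk _ (e (ι' x) i) = 0 ↔ _
      rw [Ideal.Quotient.eq_zero_iff_mem, Ideal.mem_span_singleton]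
    rw [h1]
    constructor
    · intro h
      choose y hy using h
      have : ι' x = a • e.symm y := by
        apply e.injective
        funext i
        rw [hy, map_smul, LinearEquiv.apply_symm_apply]; rfl
      have h2 : (x:K) = algebraMap ℤ_[p] K a * (e.symm y : integralClosure ℤ_[p] K) := by
        have := congrArg Subtype.val this
        rw [← Algebra.smul_def]; exact this
      rw [h2, norm_mul]
      have := (mem_intClosure p K _).1 (e.symm y).2
      nlinarith [norm_nonneg (algebraMap ℤ_[p] K a)]
    · intro h i
      have h3 : (x:K) / algebraMap ℤ_[p] K a ∈ integralClosure ℤ_[p] K := by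
        rw [mem_intClosure, norm_div, div_le_one (norm_pos_iff.2 ha')]; exact h
      have h4 : ι' x = a • (⟨_, h3⟩ : integralClosure ℤ_[p] K) := by
        apply Subtype.ext
        change (x:K) = a • ((x:K) / algebraMap ℤ_[p] K a)
        rw [Algebra.smul_def]; field_simp
      rw [h4, map_smul]
      exact ⟨_, rfl⟩
  rw [AddSubgroup.relIndex, ← hker, AddSubgroup.index_ker, AddMonoidHom.range_eq_top.2 hψ,
    AddSubgroup.card_top, Nat.card_fun, hrank]
  simp

theorem exists_unif (p : ℕ) [Fact p.Prime] (K : Type) [NormedField K] [NormedAlgebra ℚ_[p] K]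
    [FiniteDimensional ℚ_[p] K]
    [IsUltrametricDist K] [Algebra ℤ_[p] K] [IsScalarTower ℤ_[p] ℚ_[p] K] : ∃ π : K, π ≠ 0 ∧ ‖π‖ < 1 ∧ ∀ x : K, x ≠ 0 → ∃ n : ℤ, ‖x‖ = ‖π‖ ^ n := by
  let O := integralClosure ℤ_[p] K
  have hded : IsDedekindDomain O := integralClosure.isDedekindDomain ℤ_[p] ℚ_[p] K
  have hmem := mem_intClosure p K
  have hunit : ∀ x : O, IsUnit x ↔ ‖(x:K)‖ = 1 := by
    intro x
    constructor
    · rintro ⟨u, rfl⟩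
      have h1 := (hmem _).1 (u : O).2
      have h2 := (hmem _).1 ((u⁻¹ : Oˣ) : O).2
      have h3 : ((u : O) : K) * (((u⁻¹ : Oˣ) : O) : K) = 1 := by
        have := congrArg (Subtype.val) (Units.mul_inv u)
        exact this
      have h4 : ‖((u : O) : K)‖ * ‖(((u⁻¹ : Oˣ) : O) : K)‖ = 1 := by rw [← norm_mul, h3, norm_one]
      nlinarith [norm_nonneg ((u : O) : K)]
    · intro h
      have h0 : (x:K) ≠ 0 := by rw [← norm_pos_iff, h]; exact one_pos
      refine IsUnit.of_mul_eq_one ⟨(x:K)⁻¹, (hmem _).2 (by rw [norm_inv, h, inv_one])⟩ ?_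
      apply Subtype.ext
      exact mul_inv_cancel₀ h0
  have hloc : IsLocalRing O := by
    apply IsLocalRing.of_nonunits_add
    intro a b ha hb
    have key : ∀ x : O, x ∈ nonunits O ↔ ‖(x:K)‖ < 1 := by
      intro x
      rw [mem_nonunits_iff, hunit]
      exact ⟨fun h => lt_of_le_of_ne ((hmem _).1 x.2) h, fun h => h.ne⟩
    rw [key] at *
    exact (IsUltrametricDist.norm_add_le_max _ _).trans_lt (max_lt ha hb)
  have hpn : ‖(algebraMap ℚ_[p] K p)‖ < 1 := by
    rw [norm_algebraMap', Padic.norm_p]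
    exact inv_lt_one_of_one_lt₀ (by exact_mod_cast (Fact.out : p.Prime).one_lt)
  have hp0 : algebraMap ℚ_[p] K p ≠ 0 := by
    rw [Ne, map_eq_zero]; exact_mod_cast (Fact.out : p.Prime).ne_zero
  have hdvr : IsDiscreteValuationRing O := by
    refine { not_a_field' := ?_ }
    intro h
    have hf := IsLocalRing.isField_iff_maximalIdeal_eq.2 h
    have hpO : algebraMap ℚ_[p] K p ∈ O := (hmem _).2 hpn.le
    have : (⟨_, hpO⟩ : O) ≠ 0 := fun h => hp0 (congrArg Subtype.val h)
    obtain ⟨y, hy⟩ := hf.mul_inv_cancel this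
    have := (hunit _).1 (IsUnit.of_mul_eq_one y hy)
    exact hpn.ne this
  obtain ⟨π, hπ⟩ := IsDiscreteValuationRing.exists_irreducible O
  have hπ0 : (π:K) ≠ 0 := fun h => hπ.ne_zero (Subtype.ext h)
  refine ⟨π, hπ0, lt_of_le_of_ne ((hmem _).1 π.2) (fun h => hπ.not_isUnit ((hunit _).2 h)), ?_⟩
  have main : ∀ x : K, x ≠ 0 → ‖x‖ ≤ 1 → ∃ n : ℕ, ‖x‖ = ‖(π:K)‖ ^ n := by
    intro x hx hx1
    have : (⟨x, (hmem x).2 hx1⟩ : O) ≠ 0 := fun h => hx (congrArg Subtype.val h)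
    obtain ⟨n, u, hu⟩ := IsDiscreteValuationRing.eq_unit_mul_pow_irreducible this hπ
    refine ⟨n, ?_⟩
    have h2 : x = ((u : O) : K) * (π:K) ^ n := congrArg Subtype.val hu
    rw [h2, norm_mul, norm_pow, (hunit u).1 u.isUnit, one_mul]
  intro x hx
  rcases le_total ‖x‖ 1 with h | h
  · obtain ⟨n, hn⟩ := main x hx h
    exact ⟨n, by rw [hn, zpow_natCast]⟩
  · obtain ⟨n, hn⟩ := main x⁻¹ (inv_ne_zero hx) (by rw [norm_inv]; exact inv_le_one_of_one_le₀ h)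
    refine ⟨-n, ?_⟩
    rw [_root_.zpow_neg, zpow_natCast, ← hn, norm_inv, inv_inv]

theorem index_sq_aux [CompleteSpace K] : (sq K).range.index =
    4 * Nat.card (ℤ_[p] ⧸ Ideal.span {(2 : ℤ_[p])}) ^ Module.finrank ℚ_[p] K := by
  obtain ⟨π, h1, h2, h3⟩ := exists_unif p K
  have hpp := (Fact.out : p.Prime)
  have hpn : ‖(p : K)‖ < 1 := by
    rw [← map_natCast (algebraMap ℚ_[p] K), norm_algebraMap', Padic.norm_p]
    exact inv_lt_one_of_one_lt₀ (by exact_mod_cast hpp.one_lt)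
  have hc : CharZero K := charZero_of_injective_algebraMap (algebraMap ℚ_[p] K).injective
  have e2 : algebraMap ℤ_[p] K 2 = 2 := map_ofNat _ 2
  have e2p : algebraMap ℤ_[p] K (2 * p) = 2 * p := by rw [map_mul, e2, map_natCast]
  have hp0 : (p : K) ≠ 0 := by exact_mod_cast hpp.ne_zero
  have hp0' : (p : ℤ_[p]) ≠ 0 := by exact_mod_cast hpp.ne_zero
  have h2n : ‖(2:K)‖ ≤ 1 := by
    have : (2:K) ∈ integralClosure ℤ_[p] K := by
      rw [← e2]; exact (algebraMap ℤ_[p] (integralClosure ℤ_[p] K) 2).2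
    exact (mem_intClosure p K _).1 this
  have := index_sq_normed (p : K) hp0 two_ne_zero h2n hpn (by
    rw [← e2p, relIndex_ball p K _ (mul_ne_zero two_ne_zero hp0')]
    exact pow_ne_zero _ (card_quot_ne_zero p _ (mul_ne_zero two_ne_zero hp0'))) π h1 h2 h3
  rw [this, ← e2, relIndex_ball p K _ two_ne_zero]

end padic

theorem index_sq (p : ℕ) [Fact p.Prime] (K : Type) [Field K] [Algebra ℚ_[p] K]
    [FiniteDimensional ℚ_[p] K] : (powMonoidHom 2 : Kˣ →* Kˣ).range.index =
    4 * Nat.card (ℤ_[p] ⧸ Ideal.span {(2 : ℤ_[p])}) ^ Module.finrank ℚ_[p] K := by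
  letI := spectralNorm.normedField ℚ_[p] K
  letI := spectralNorm.normedAlgebra ℚ_[p] K
  haveI : IsUltrametricDist K :=
    IsUltrametricDist.isUltrametricDist_of_forall_norm_add_le_max_norm
      (isNonarchimedean_spectralNorm (K := ℚ_[p]) (L := K))
  haveI : CompleteSpace K := spectralNorm.completeSpace ℚ_[p] K
  letI : Algebra ℤ_[p] K := ((algebraMap ℚ_[p] K).comp (algebraMap ℤ_[p] ℚ_[p])).toAlgebra
  haveI : IsScalarTower ℤ_[p] ℚ_[p] K := IsScalarTower.of_algebraMap_eq (fun x => rfl)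
  exact index_sq_aux p K

end OrthAux

namespace OrthAux

/-- the norm subgroup `{x² - α y²}` of `Fˣ`. -/
def NG {F : Type*} [Field F] (α : F) : Subgroup Fˣ where
  carrier := {f | ∃ x y : F, (f:F) = x * x - α * (y * y)}
  one_mem' := ⟨1, 0, by simp⟩
  mul_mem' := by
    rintro a b ⟨x, y, h⟩ ⟨z, w, h'⟩
    exact ⟨x * z + α * y * w, x * w + y * z, by push_cast; rw [h, h']; ring⟩
  inv_mem' := by
    rintro a ⟨x, y, h⟩
    refine ⟨x * (a:F)⁻¹, y * (a:F)⁻¹, ?_⟩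
    have : (a:F) ≠ 0 := a.ne_zero
    rw [Units.val_inv_eq_inv_val]
    field_simp
    linear_combination h

theorem mem_NG {F : Type*} [Field F] {α : F} {f : Fˣ} :
    f ∈ NG α ↔ ∃ x y : F, (f:F) = x * x - α * (y * y) := Iff.rfl

open QuadraticAlgebra in
theorem index_NG (p : ℕ) [Fact p.Prime] (F : Type) [Field F] [Algebra ℚ_[p] F]
    [FiniteDimensional ℚ_[p] F] (α : F) (hα : ¬ IsSquare α) : (NG α).index = 2 := by
  have hc : CharZero F := charZero_of_injective_algebraMap (algebraMap ℚ_[p] F).injective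
  have hα0 : α ≠ 0 := by rintro rfl; exact hα ⟨0, by simp⟩
  haveI hfact : Fact (∀ r, r ^ 2 ≠ α + 0 * r) := ⟨fun r h => hα ⟨r, by rw [← pow_two, h]; simp⟩⟩
  let K := QuadraticAlgebra F α 0
  haveI : FiniteDimensional ℚ_[p] K := FiniteDimensional.trans ℚ_[p] F K
  have hK := index_sq p K
  have hF := index_sq p F
  have hrk : Module.finrank ℚ_[p] K = Module.finrank ℚ_[p] F * 2 := by
    rw [← Module.finrank_mul_finrank ℚ_[p] F K, QuadraticAlgebra.finrank_eq_two]
  set t := Nat.card (ℤ_[p] ⧸ Ideal.span {(2 : ℤ_[p])}) ^ Module.finrank ℚ_[p] F with ht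
  have ht0 : t ≠ 0 := pow_ne_zero _ (card_quot_ne_zero p _ two_ne_zero)
  rw [hrk, pow_mul, ← ht] at hK
  set SF := (powMonoidHom 2 : Fˣ →* Fˣ).range with hSF
  set SK := (powMonoidHom 2 : Kˣ →* Kˣ).range with hSK
  let i : Fˣ →* Kˣ := Units.map (algebraMap F K).toMonoidHom
  let N : Kˣ →* Fˣ := Units.map (QuadraticAlgebra.norm (R := F) (a := α) (b := 0))
  have hNv : ∀ z : Kˣ, ((N z : Fˣ) : F) = (z:K).re * (z:K).re - α * ((z:K).im * (z:K).im) := by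
    intro z
    change QuadraticAlgebra.norm (z:K) = _
    rw [QuadraticAlgebra.norm_def]; ring
  have hNr : N.range = NG α := by
    ext f
    constructor
    · rintro ⟨z, rfl⟩
      exact ⟨_, _, hNv z⟩
    · rintro ⟨x, y, h⟩
      have hz : (⟨x, y⟩ : K) ≠ 0 := by
        intro h0
        have h1 : x = 0 := congrArg QuadraticAlgebra.re h0
        have h2 : y = 0 := congrArg QuadraticAlgebra.im h0
        apply f.ne_zero
        rw [h, h1, h2]; simp
      refine ⟨Units.mk0 _ hz, ?_⟩
      ext
      rw [hNv, h]; rfl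
  have hNi : ∀ f, N (i f) = f ^ 2 := by
    intro f; ext
    rw [hNv]
    change (f:F) * f - α * (0 * 0) = _
    push_cast; ring
  have hSFN : SF ≤ NG α := by
    rintro _ ⟨f, rfl⟩
    rw [← hNr]
    exact ⟨i f, hNi f⟩
  have hex : SF.comap N = i.range ⊔ SK := by
    apply le_antisymm
    · rintro z ⟨f, hf⟩
      have hf : f ^ 2 = N z := hf
      -- w = z / f has norm one
      let w : Kˣ := z * (i f)⁻¹
      have hw : N w = 1 := by
        simp only [w, map_mul, map_inv, hNi, hf]; simp
      have hz : z = w * i f := by simp [w]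
      have hwS : w ∈ i.range ⊔ SK := by
        by_cases h1 : (w : K) = -1
        · refine (le_sup_left : i.range ≤ _) ⟨-1, ?_⟩
          ext1
          rw [h1]; simp [i]
        · -- w = (1+w)^2 / N(1+w)
          have h2 : 1 + (w:K) ≠ 0 := fun h => h1 (by linear_combination h)
          let v : Kˣ := Units.mk0 _ h2
          have hv : w * i (N v) = v ^ 2 := by
            have hwn := hNv w
            rw [hw] at hwn
            have hvn := hNv v
            have hvr : (v:K).re = 1 + (w:K).re := rfl
            have hvi : (v:K).im = (w:K).im := by
              change (0:F) + (w:K).im = _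
              rw [zero_add]
            have hwn : (1:F) = _ := hwn
            ext1
            apply QuadraticAlgebra.ext
            · change ((w:K) * algebraMap F K ((N v : Fˣ) : F)).re = ((v:K) ^ 2).re
              rw [hvn, pow_two, re_mul, re_mul, hvr, hvi, algebraMap_re, algebraMap_im]
              linear_combination (-(w:K).re - 1) * hwn
            · change ((w:K) * algebraMap F K ((N v : Fˣ) : F)).im = ((v:K) ^ 2).im
              rw [hvn, pow_two, im_mul, im_mul, hvr, hvi, algebraMap_re, algebraMap_im]
              linear_combination (-(w:K).im) * hwn
          have : w = i (N v)⁻¹ * v ^ 2 := by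
            rw [← hv, map_inv, mul_comm w, inv_mul_cancel_left]
          rw [this]
          exact Subgroup.mul_mem_sup ⟨_, rfl⟩ ⟨v, rfl⟩
      rw [hz]
      exact Subgroup.mul_mem _ hwS ((le_sup_left : i.range ≤ _) ⟨f, rfl⟩)
    · refine sup_le ?_ ?_
      · rintro _ ⟨f, rfl⟩
        exact ⟨f, (hNi f).symm⟩
      · rintro _ ⟨z, rfl⟩
        exact ⟨N z, by simp⟩
  have hcm : SF.relIndex (SK.comap i) = 2 := by
    rw [Subgroup.relIndex_eq_two_iff]
    have hω : (ω : K) * ω = algebraMap F K α := by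
      rw [omega_mul_omega_eq_mk]; rfl
    have hω0 : (ω : K) ≠ 0 := fun h => by
      have := congrArg QuadraticAlgebra.im h; simp at this
    refine ⟨Units.mk0 α hα0, ⟨Units.mk0 ω hω0, ?_⟩, ?_⟩
    · ext1
      change (ω:K) ^ 2 = algebraMap F K α
      rw [pow_two, hω]
    · rintro b ⟨z, hz⟩
      have hz : (z:K) ^ 2 = algebraMap F K b := congrArg Units.val hz
      have hr := congrArg QuadraticAlgebra.re hz
      have hi := congrArg QuadraticAlgebra.im hz
      rw [pow_two] at hr hi
      rw [re_mul, algebraMap_re] at hr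
      rw [im_mul, algebraMap_im] at hi
      have hi : (z:K).re * (z:K).im = 0 := by
        have : (2:F) * ((z:K).re * (z:K).im) = 0 := by linear_combination hi
        simpa using this
      have hb0 : (b:F) ≠ 0 := b.ne_zero
      have key : ∀ f : Fˣ, f ∈ SF ↔ IsSquare (f:F) := by
        intro f
        constructor
        · rintro ⟨g, rfl⟩
          exact ⟨g, by simp [pow_two]⟩
        · rintro ⟨g, hg⟩
          have hg0 : g ≠ 0 := by rintro rfl; exact f.ne_zero (by simpa using hg)
          exact ⟨Units.mk0 g hg0, by ext; simp [pow_two, hg]⟩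
      rw [key, key]
      have hbα : ¬ (IsSquare ((b * Units.mk0 α hα0 : Fˣ):F) ∧ IsSquare (b:F)) := by
        rintro ⟨⟨r, hr⟩, ⟨s, hs⟩⟩
        apply hα
        have hs0 : s ≠ 0 := by rintro rfl; exact hb0 (by simpa using hs)
        refine ⟨r / s, ?_⟩
        simp only [Units.val_mul, Units.val_mk0, hs] at hr
        field_simp
        linear_combination hr
      rcases mul_eq_zero.mp hi with h | h
      · have h1 : IsSquare ((b * Units.mk0 α hα0 : Fˣ):F) := by
          refine ⟨α * (z:K).im, ?_⟩
          simp only [Units.val_mul, Units.val_mk0]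
          rw [← hr, h]; ring
        exact Or.inl ⟨h1, fun h2 => hbα ⟨h1, h2⟩⟩
      · have h1 : IsSquare (b:F) := by
          refine ⟨(z:K).re, ?_⟩
          rw [← hr, h]; ring
        exact Or.inr ⟨h1, fun h2 => hbα ⟨h2, h1⟩⟩
  have m1 := Subgroup.relIndex_mul_index (H := SK) (K := i.range ⊔ SK) le_sup_right
  have e1 : SK.relIndex i.range = (SK.comap i).index := (Subgroup.index_comap SK i).symm
  have e2 : (SF.comap N).index = SF.relIndex (NG α) := by rw [Subgroup.index_comap, hNr]
  rw [Subgroup.relIndex_sup_right, e1, ← hex, e2] at m1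
  have m2 := Subgroup.relIndex_mul_index hSFN
  have hSFc : SF ≤ SK.comap i := by
    rintro _ ⟨f, rfl⟩
    exact ⟨i f, by simp⟩
  have m3 := Subgroup.relIndex_mul_index hSFc
  rw [hcm, hF] at m3
  rw [hF] at m2
  rw [hK] at m1
  have hB : (SK.comap i).index = 2 * t := by omega
  rw [hB] at m1
  have hA : SF.relIndex (NG α) = 2 * t := by
    apply mul_left_cancel₀ (mul_ne_zero two_ne_zero ht0)
    rw [m1]; ring
  rw [hA] at m2
  apply mul_left_cancel₀ (mul_ne_zero two_ne_zero ht0)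
  rw [m2]; ring

end OrthAux

namespace OrthAux

section forms
open Matrix

variable {F : Type} [Field F]

/-- the properties of a local field used in the classification. -/
structure LF (F : Type) [Field F] : Prop where
  two : (2:F) ≠ 0
  idx : ∀ α : F, ¬ IsSquare α → (NG α).index = 2
  sq : 4 ≤ (powMonoidHom 2 : Fˣ →* Fˣ).range.index

theorem univ_of_sq (hF : LF F) {α : F} (h0 : α ≠ 0) (h : IsSquare α) (f : F) :
    ∃ x y : F, f = x * x - α * (y * y) := by
  obtain ⟨s, rfl⟩ := h
  have h2 := hF.two
  have hs : s ≠ 0 := by rintro rfl; simp at h0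
  refine ⟨(f + 1) / 2, (f - 1) / (2 * s), ?_⟩
  field_simp
  ring

theorem mul_mem_of_not (hF : LF F) {α : F} (h0 : α ≠ 0) {f g : Fˣ} (hf : f ∉ NG α)
    (hg : g ∉ NG α) : f * g ∈ NG α := by
  by_cases h : IsSquare α
  · exact univ_of_sq hF h0 h _
  · rw [Subgroup.mul_mem_iff_of_index_two (hF.idx α h)]
    tauto

theorem NG_symm (hF : LF F) {α β : Fˣ} (h : β ∈ NG (α:F)) : α ∈ NG (β:F) := by
  obtain ⟨x, y, h⟩ := h
  by_cases hy : y = 0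
  · exact univ_of_sq hF β.ne_zero ⟨x, by rw [h, hy]; ring⟩ _
  · refine ⟨x / y, 1 / y, ?_⟩
    rw [h]; field_simp; ring

theorem NG_not_le (hF : LF F) {α β : Fˣ} (ha : ¬ IsSquare (α:F)) (hb : ¬ IsSquare (β:F))
    (hab : ¬ IsSquare ((α:F) * β)) : ∃ f, f ∈ NG (α:F) ∧ f ∉ NG (β:F) := by
  by_contra! hle
  have hle : NG (α:F) ≤ NG (β:F) := hle
  have h1 := Subgroup.relIndex_mul_index hle
  rw [hF.idx _ ha, hF.idx _ hb] at h1
  have h2 : (NG (α:F)).relIndex (NG (β:F)) = 1 := by omega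
  have hge : NG (β:F) ≤ NG (α:F) := Subgroup.relIndex_eq_one.mp h2
  have h3 : NG (((α * β : Fˣ)):F) = ⊤ := by
    rw [eq_top_iff]
    intro x _
    apply NG_symm hF
    by_cases hx : α ∈ NG (x:F)
    · exact mul_mem hx (NG_symm hF (hle (NG_symm hF hx)))
    · exact mul_mem_of_not hF x.ne_zero hx
        fun h => hx (NG_symm hF (hge (NG_symm hF h)))
  have h4 := hF.idx _ hab
  rw [Units.val_mul] at h3
  rw [h3] at h4
  simp at h4

theorem NG_meet (hF : LF F) {α β : Fˣ} (ha : ¬ IsSquare (α:F)) (hb : ¬ IsSquare (β:F))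
    (hab : ¬ IsSquare ((α:F) * β)) (a e : Fˣ) :
    ∃ u : Fˣ, a⁻¹ * u ∈ NG (α:F) ∧ e⁻¹ * u ∈ NG (β:F) := by
  by_cases h1 : a⁻¹ * e ∈ NG (α:F)
  · exact ⟨e, h1, by simp [one_mem]⟩
  by_cases h2 : e⁻¹ * a ∈ NG (β:F)
  · exact ⟨a, by simp [one_mem], h2⟩
  obtain ⟨f, hf, hf'⟩ := NG_not_le hF ha hb hab
  refine ⟨a * f, by simpa using hf, ?_⟩
  rw [← mul_assoc]
  exact mul_mem_of_not hF β.ne_zero h2 hf'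

theorem ternary (hF : LF F) {a b c e : F} (ha : a ≠ 0) (hb : b ≠ 0) (hc : c ≠ 0) (he : e ≠ 0)
    (h : ¬ IsSquare (-(a * b * c) * e)) :
    ∃ x y z : F, a * (x * x) + (b * (y * y) + c * (z * z)) = e := by
  have h2 := hF.two
  by_cases h1 : IsSquare (e * c)
  · obtain ⟨s, hs⟩ := h1
    refine ⟨0, 0, s / c, ?_⟩
    field_simp
    linear_combination -hs
  by_cases h3 : IsSquare (-(a * b))
  · obtain ⟨s, hs⟩ := h3
    have hs0 : s ≠ 0 := by
      rintro rfl
      apply mul_ne_zero ha hb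
      linear_combination -hs
    refine ⟨(1 + e / a) / 2, (1 - e / a) / 2 * (a / s), 0, ?_⟩
    have hbs : b = - (s * s) / a := by field_simp; linear_combination -hs
    rw [hbs]
    field_simp
    ring
  have hm : ¬ IsSquare (((Units.mk0 (-(a * b)) (neg_ne_zero.mpr (mul_ne_zero ha hb)) : Fˣ) : F) *
      (Units.mk0 (e * c) (mul_ne_zero he hc) : Fˣ)) := by
    simp only [Units.val_mk0]
    convert h using 2
    ring
  obtain ⟨u, ⟨x, y, hu⟩, z, w, hu'⟩ := NG_meet hF h3 h1 hm (Units.mk0 a ha) (Units.mk0 e he)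
  have hu0 : (u:F) ≠ 0 := u.ne_zero
  simp only [Units.val_mul, Units.val_inv_eq_inv_val, Units.val_mk0] at hu hu'
  have hu1 : (u:F) = a * (x * x) + b * (a * y * (a * y)) := by
    field_simp at hu
    rw [hu]; ring
  have hu2 : (u:F) = e * (z * z) - c * (e * w * (e * w)) := by
    field_simp at hu'
    rw [hu']; ring
  by_cases hz : z = 0
  · have hw : w ≠ 0 := by
      rintro rfl
      apply hu0
      rw [hu2, hz]; ring
    set s := (e / c - 1) / (2 * (e * w)) with hs
    refine ⟨x * s, a * y * s, (e / c + 1) / 2, ?_⟩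
    have e3 : a * (x * x) + b * (a * y * (a * y)) = - c * (e * w * (e * w)) := by
      rw [← hu1, hu2, hz]; ring
    have e4 : a * (x * s * (x * s)) + (b * (a * y * s * (a * y * s)) +
        c * ((e / c + 1) / 2 * ((e / c + 1) / 2))) =
        (- c * (e * w * (e * w))) * (s * s) + c * ((e / c + 1) / 2 * ((e / c + 1) / 2)) := by
      rw [← e3]; ring
    rw [e4, hs]
    field_simp
    ring
  · refine ⟨x / z, a * y / z, e * w / z, ?_⟩
    field_simp
    linear_combination hu2 - hu1

/-- congruence of matrices with possibly different index types. -/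
def Cong {m n : Type} [Fintype m] [DecidableEq m] [Fintype n] [DecidableEq n]
    (A : Matrix m m F) (B : Matrix n n F) : Prop :=
  ∃ (P : Matrix m n F) (Q : Matrix n m F), P * Q = 1 ∧ Q * P = 1 ∧ Pᵀ * A * P = B

/-- the value `e` is represented. -/
def Rep {m : Type} [Fintype m] (A : Matrix m m F) (e : F) : Prop :=
  ∃ v : m → F, v ⬝ᵥ A *ᵥ v = e

section cong
variable {m n l : Type} [Fintype m] [DecidableEq m] [Fintype n] [DecidableEq n]
  [Fintype l] [DecidableEq l]

theorem Cong.symm {A : Matrix m m F} {B : Matrix n n F} (h : Cong A B) : Cong B A := by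
  obtain ⟨P, Q, h1, h2, rfl⟩ := h
  refine ⟨Q, P, h2, h1, ?_⟩
  have h3 : Qᵀ * Pᵀ = 1 := by rw [← transpose_mul, h1, transpose_one]
  calc Qᵀ * (Pᵀ * A * P) * Q = (Qᵀ * Pᵀ) * A * (P * Q) := by simp only [Matrix.mul_assoc]
    _ = A := by rw [h3, h1, Matrix.one_mul, Matrix.mul_one]

theorem Cong.trans {A : Matrix m m F} {B : Matrix n n F} {C : Matrix l l F}
    (h : Cong A B) (h' : Cong B C) : Cong A C := by
  obtain ⟨P, Q, h1, h2, rfl⟩ := h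
  obtain ⟨R, S, h3, h4, rfl⟩ := h'
  refine ⟨P * R, S * Q, ?_, ?_, ?_⟩
  · calc P * R * (S * Q) = P * (R * S) * Q := by simp only [Matrix.mul_assoc]
      _ = 1 := by rw [h3, Matrix.mul_one, h1]
  · calc S * Q * (P * R) = S * (Q * P) * R := by simp only [Matrix.mul_assoc]
      _ = 1 := by rw [h2, Matrix.mul_one, h4]
  · simp only [Matrix.mul_assoc, transpose_mul]

theorem Cong.block {A : Matrix m m F} {B : Matrix n n F} (h : Cong A B) (C : Matrix l l F) :
    Cong (fromBlocks C 0 0 A) (fromBlocks C 0 0 B) := by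
  obtain ⟨P, Q, h1, h2, rfl⟩ := h
  refine ⟨fromBlocks 1 0 0 P, fromBlocks 1 0 0 Q, ?_, ?_, ?_⟩
  · simp [fromBlocks_multiply, h1]
  · simp [fromBlocks_multiply, h2]
  · simp [fromBlocks_multiply, fromBlocks_transpose]

theorem Cong.det {A : Matrix m m F} {B : Matrix n n F} (h : Cong A B) :
    ∃ s : F, s ≠ 0 ∧ B.det = s * s * A.det := by
  obtain ⟨P, Q, h1, h2, rfl⟩ := h
  let f : m ≃ n := indexEquivOfInv h1 h2
  refine ⟨(P.submatrix id f).det, ?_, ?_⟩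
  · have : (P.submatrix id f) * (Q.submatrix f id) = 1 := by
      rw [submatrix_mul_equiv, h1]; simp
    intro h
    have h' := congrArg Matrix.det this
    rw [det_mul, h] at h'
    simp at h'
  · rw [← det_submatrix_equiv_self f]
    have : (Pᵀ * A * P).submatrix f f = (P.submatrix id f)ᵀ * A * (P.submatrix id f) := by
      ext i j; simp [Matrix.mul_apply]
    rw [this, det_mul, det_mul, det_transpose]
    ring

theorem Cong.symmetric {A : Matrix m m F} {B : Matrix n n F} (h : Cong A B) (hA : Aᵀ = A) :
    Bᵀ = B := by
  obtain ⟨P, Q, h1, h2, rfl⟩ := h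
  simp [transpose_mul, hA, Matrix.mul_assoc]

theorem Cong.rep {A : Matrix m m F} {B : Matrix n n F} (h : Cong A B) {e : F} (hB : Rep B e) :
    Rep A e := by
  obtain ⟨P, Q, h1, h2, rfl⟩ := h
  obtain ⟨v, rfl⟩ := hB
  refine ⟨P *ᵥ v, ?_⟩
  simp only [← mulVec_mulVec, Matrix.mul_assoc]
  rw [dotProduct_mulVec v, vecMul_transpose]

theorem cong_reindex (A : Matrix m m F) (f : n ≃ m) : Cong A (A.submatrix f f) := by
  refine ⟨(1 : Matrix m m F).submatrix id f, (1 : Matrix m m F).submatrix f id, ?_, ?_, ?_⟩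
  · rw [submatrix_mul_equiv]; simp
  · rw [← submatrix_mul _ _ _ _ _ Function.bijective_id]; simp
  · ext i j
    simp [Matrix.mul_apply, Matrix.one_apply]

end cong

/-- symmetric and invertible. -/
def Good {m : Type} [Fintype m] [DecidableEq m] (A : Matrix m m F) : Prop :=
  Aᵀ = A ∧ A.det ≠ 0

/-- `A` splits as `<a> ⊕ A'`. -/
def Sp {m n : Type} [Fintype m] [DecidableEq m] [Fintype n] [DecidableEq n]
    (A : Matrix m m F) (a : F) (A' : Matrix n n F) : Prop :=
  Cong A (fromBlocks (a • (1 : Matrix Unit Unit F)) 0 0 A')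

theorem exists_rep (h2 : (2:F) ≠ 0) {n : ℕ} {A : Matrix (Fin (n+1)) (Fin (n+1)) F} (hA : Good A) :
    ∃ e, e ≠ 0 ∧ Rep A e := by
  by_contra! h
  have h : ∀ v : Fin (n+1) → F, v ⬝ᵥ A *ᵥ v = 0 := by
    intro v
    by_contra hv
    exact h _ hv ⟨v, rfl⟩
  have hd : ∀ i, A i i = 0 := by
    intro i
    have := h (Pi.single i 1)
    simpa using this
  apply hA.2
  have : A = 0 := by
    ext i k
    have h1 := h (Pi.single i 1 + Pi.single k 1)
    have hs : A k i = A i k := congrFun (congrFun hA.1 i) k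
    simp [mulVec_add, hd, hs] at h1
    have h1 : 2 * A i k = 0 := by linear_combination h1
    simpa [h2] using h1
  rw [this]
  exact det_zero

theorem split_aux {n : Type} [Fintype n] [DecidableEq n] (e : F) (he : e ≠ 0)
    (c : Matrix Unit n F) (D : Matrix n n F) :
    Sp (fromBlocks (e • (1 : Matrix Unit Unit F)) c cᵀ D) e (D - e⁻¹ • (cᵀ * c)) := by
  refine ⟨fromBlocks 1 (-(e⁻¹ • c)) 0 1, fromBlocks 1 (e⁻¹ • c) 0 1, ?_, ?_, ?_⟩
  · simp [fromBlocks_multiply]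
  · simp [fromBlocks_multiply]
  · simp [fromBlocks_multiply, fromBlocks_transpose, he, sub_eq_neg_add]

theorem split {n : ℕ} {A : Matrix (Fin (n+1)) (Fin (n+1)) F} (hA : Good A) {e : F}
    (he : e ≠ 0) (hr : Rep A e) :
    ∃ A' : Matrix (Fin n) (Fin n) F, Good A' ∧ Sp A e A' ∧
      ∃ s, s ≠ 0 ∧ e * A'.det = s * s * A.det := by
  obtain ⟨v, hv⟩ := hr
  obtain ⟨i, hi⟩ : ∃ i, v i ≠ 0 := by
    by_contra! h
    have : v = 0 := funext h
    rw [this] at hv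
    simp at hv
    exact he hv.symm
  let P := (1 : Matrix (Fin (n+1)) (Fin (n+1)) F).updateCol i v
  have hP : P.det = v i := by
    rw [← cramer_apply, cramer_one]; rfl
  have hPu : IsUnit P.det := by rw [hP]; exact hi.isUnit
  let B := Pᵀ * A * P
  have hAB : Cong A B := ⟨P, P⁻¹, mul_nonsing_inv _ hPu, nonsing_inv_mul _ hPu, rfl⟩
  have hB : B i i = e := by
    rw [← hv]
    have h1 : ∀ k, P k i = v k := by intro k; simp [P]
    simp only [B, Matrix.mul_assoc]
    rw [Matrix.mul_apply]
    simp only [Matrix.transpose_apply, h1, dotProduct]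
    refine Finset.sum_congr rfl fun k _ => ?_
    congr 1
    simp only [Matrix.mul_apply, h1, mulVec, dotProduct]
  have hBs : Bᵀ = B := hAB.symmetric hA.1
  obtain ⟨f, hf⟩ : ∃ f : Unit ⊕ Fin n ≃ Fin (n+1), f (Sum.inl ()) = i := by
    let f0 : Unit ⊕ Fin n ≃ Fin (n+1) := Fintype.equivOfCardEq (by simp; omega)
    exact ⟨f0.trans (Equiv.swap (f0 (Sum.inl ())) i), by simp⟩
  let M := B.submatrix f f
  have hM : M = fromBlocks (e • (1 : Matrix Unit Unit F)) M.toBlocks₁₂ M.toBlocks₁₂ᵀ M.toBlocks₂₂ := by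
    conv_lhs => rw [← fromBlocks_toBlocks M]
    congr 1
    · ext ⟨⟩ ⟨⟩
      simp [M, toBlocks₁₁, hf, hB]
    · ext a ⟨⟩
      simp only [M, toBlocks₂₁, toBlocks₁₂, submatrix_apply, of_apply, transpose_apply]
      exact congrFun (congrFun hBs.symm _) _
  have hsp : Sp A e (M.toBlocks₂₂ - e⁻¹ • (M.toBlocks₁₂ᵀ * M.toBlocks₁₂)) := by
    have h1 : Cong A M := hAB.trans (cong_reindex B f)
    have h2 := split_aux e he M.toBlocks₁₂ M.toBlocks₂₂
    rw [← hM] at h2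
    exact h1.trans h2
  refine ⟨_, ?_, hsp, ?_⟩
  · constructor
    · have := hsp.symmetric hA.1
      rw [fromBlocks_transpose] at this
      have h3 := congrArg toBlocks₂₂ this
      simpa using h3
    · obtain ⟨s, hs, h⟩ := hsp.det
      rw [det_fromBlocks_zero₂₁] at h
      intro h0
      rw [h0, mul_zero] at h
      exact mul_ne_zero (mul_ne_zero hs hs) hA.2 h.symm
  · obtain ⟨s, hs, h⟩ := hsp.det
    rw [det_fromBlocks_zero₂₁] at h
    refine ⟨s, hs, ?_⟩
    rw [← h]; simp

theorem Sp.rep {m n : Type} [Fintype m] [DecidableEq m] [Fintype n] [DecidableEq n]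
    {A : Matrix m m F} {a : F} {A' : Matrix n n F} (h : Sp A a A') {f : F} (hf : Rep A' f) (x : F) :
    Rep A (a * (x * x) + f) := by
  refine Cong.rep h ?_
  obtain ⟨v, rfl⟩ := hf
  refine ⟨Sum.elim (fun _ => x) v, ?_⟩
  rw [fromBlocks_mulVec]
  simp [dotProduct, smul_mulVec]
  ring

theorem Sp.cong {m n l k : Type} [Fintype m] [DecidableEq m] [Fintype n] [DecidableEq n]
    [Fintype l] [DecidableEq l] [Fintype k] [DecidableEq k]
    {A : Matrix m m F} {a : F} {A' : Matrix n n F} {B : Matrix l l F} {B' : Matrix k k F}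
    (h : Sp A a A') (h' : Sp B a B') (hc : Cong A' B') : Cong A B :=
  (Cong.trans h (hc.block _)).trans (Cong.symm h')

theorem rep_zero {n : Type} [Fintype n] (A : Matrix n n F) : Rep A 0 := ⟨0, by simp⟩

end forms

end OrthAux

namespace OrthAux

section forms2
open Matrix

variable {F : Type} [Field F]

/-- same square class. -/
def SC (a b : F) : Prop := ∃ s : F, s ≠ 0 ∧ b = s * s * a

theorem SC.symm {a b : F} (h : SC a b) : SC b a := by
  obtain ⟨s, hs, rfl⟩ := h
  exact ⟨s⁻¹, inv_ne_zero hs, by field_simp⟩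

theorem SC.trans {a b c : F} (h : SC a b) (h' : SC b c) : SC a c := by
  obtain ⟨s, hs, rfl⟩ := h
  obtain ⟨t, ht, rfl⟩ := h'
  exact ⟨t * s, mul_ne_zero ht hs, by ring⟩

theorem SC.of_mul {a b e : F} (he : e ≠ 0) (h : SC (e * a) (e * b)) : SC a b := by
  obtain ⟨s, hs, h⟩ := h
  refine ⟨s, hs, mul_left_cancel₀ he ?_⟩
  rw [h]; ring

theorem SC.isSquare {a b : F} (h : SC a b) (ha : IsSquare a) : IsSquare b := by
  obtain ⟨s, hs, rfl⟩ := h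
  obtain ⟨t, rfl⟩ := ha
  exact ⟨s * t, by ring⟩

theorem SC.neg_mul {a b : F} (h : SC a b) (e : F) : SC (-a * e) (-b * e) := by
  obtain ⟨s, hs, rfl⟩ := h
  exact ⟨s, hs, by ring⟩

theorem cong1 {A B : Matrix (Fin 1) (Fin 1) F} (h : SC A.det B.det) : Cong A B := by
  obtain ⟨s, hs, h⟩ := h
  refine ⟨s • 1, s⁻¹ • 1, ?_, ?_, ?_⟩
  · simp [hs]
  · simp [hs]
  · ext i k
    have hi : i = 0 := Subsingleton.elim _ _
    have hk : k = 0 := Subsingleton.elim _ _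
    subst hi hk
    rw [det_fin_one, det_fin_one] at h
    rw [h]
    simp [mul_assoc]

theorem pair {n : ℕ} {A B : Matrix (Fin (n+1)) (Fin (n+1)) F} (hA : Good A) (hB : Good B)
    (h : SC A.det B.det) {e : F} (he : e ≠ 0) (h1 : Rep A e) (h2 : Rep B e) :
    ∃ A' B' : Matrix (Fin n) (Fin n) F, Good A' ∧ Good B' ∧ SC A'.det B'.det ∧
      Sp A e A' ∧ Sp B e B' := by
  obtain ⟨A', hA', hsA, s, hs, hsd⟩ := split hA he h1
  obtain ⟨B', hB', hsB, t, ht, htd⟩ := split hB he h2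
  refine ⟨A', B', hA', hB', SC.of_mul he ?_, hsA, hsB⟩
  exact (SC.symm ⟨s, hs, hsd⟩).trans (h.trans ⟨t, ht, htd⟩)

theorem cong2 {A B : Matrix (Fin 2) (Fin 2) F} (hA : Good A) (hB : Good B)
    (h : SC A.det B.det) {e : F} (he : e ≠ 0) (h1 : Rep A e) (h2 : Rep B e) : Cong A B := by
  obtain ⟨A', B', -, -, hs, hA', hB'⟩ := pair hA hB h he h1 h2
  exact hA'.cong hB' (cong1 hs)

theorem rep1 (A : Matrix (Fin 1) (Fin 1) F) (x : F) : Rep A (A.det * (x * x)) := by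
  refine ⟨fun _ => x, ?_⟩
  simp [mulVec, dotProduct]
  ring

theorem rep2 {A : Matrix (Fin 2) (Fin 2) F} (hA : Good A) {a f : Fˣ} (ha : Rep A (a:F))
    (hf : a⁻¹ * f ∈ NG (-A.det)) : Rep A (f:F) := by
  obtain ⟨A', hA', hsA, s, hs, hsd⟩ := split hA a.ne_zero ha
  obtain ⟨x, y, h⟩ := hf
  have ha0 : (a:F) ≠ 0 := a.ne_zero
  have := hsA.rep (rep1 A' (a * y / s)) x
  convert this using 1
  rw [Units.val_mul, Units.val_inv_eq_inv_val] at h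
  have hd : A'.det = s * s * A.det / a := by field_simp; linear_combination hsd
  rw [hd]
  field_simp at h ⊢
  rw [h]; ring

theorem NG_le_of_SC {d d' : F} (h : SC d d') : NG (-d) ≤ NG (-d') := by
  obtain ⟨s, hs, rfl⟩ := h
  rintro f ⟨x, y, hf⟩
  refine ⟨x, y / s, ?_⟩
  rw [hf]; field_simp

theorem rep2_univ (hF : LF F) {A : Matrix (Fin 2) (Fin 2) F} (hA : Good A)
    (h : IsSquare (-A.det)) (f : Fˣ) : Rep A (f:F) := by
  obtain ⟨a, ha, hr⟩ := exists_rep hF.two hA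
  exact rep2 hA (a := Units.mk0 a ha) hr (univ_of_sq hF (neg_ne_zero.mpr hA.2) h _)

theorem cong2_univ (hF : LF F) {A B : Matrix (Fin 2) (Fin 2) F} (hA : Good A) (hB : Good B)
    (h : IsSquare (-A.det)) (h' : IsSquare (-B.det)) : Cong A B := by
  have hsc : SC A.det B.det := by
    obtain ⟨s, hs⟩ := h
    obtain ⟨t, ht⟩ := h'
    have hs0 : s ≠ 0 := by rintro rfl; apply hA.2; linear_combination -hs
    have ht0 : t ≠ 0 := by rintro rfl; apply hB.2; linear_combination -ht
    refine ⟨t / s, div_ne_zero ht0 hs0, ?_⟩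
    field_simp
    linear_combination A.det * ht - B.det * hs
  exact cong2 hA hB hsc one_ne_zero (rep2_univ hF hA h 1) (rep2_univ hF hB h' 1)

theorem three2 (hF : LF F) {A B C : Matrix (Fin 2) (Fin 2) F} (hA : Good A) (hB : Good B)
    (hC : Good C) (h1 : SC A.det B.det) (h2 : SC B.det C.det) : Cong A B ∨ Cong A C ∨ Cong B C := by
  obtain ⟨a, ha, hra⟩ := exists_rep hF.two hA
  obtain ⟨b, hb, hrb⟩ := exists_rep hF.two hB
  obtain ⟨c, hc, hrc⟩ := exists_rep hF.two hC
  let a' := Units.mk0 a ha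
  let b' := Units.mk0 b hb
  let c' := Units.mk0 c hc
  have hd : -A.det ≠ 0 := neg_ne_zero.mpr hA.2
  by_cases hab : a'⁻¹ * b' ∈ NG (-A.det)
  · exact Or.inl (cong2 hA hB h1 hb (rep2 hA (a := a') hra hab) hrb)
  by_cases hbc : b'⁻¹ * c' ∈ NG (-A.det)
  · exact Or.inr (Or.inr (cong2 hB hC h2 hc (rep2 hB (a := b') hrb (NG_le_of_SC h1 hbc)) hrc))
  refine Or.inr (Or.inl (cong2 hA hC (h1.trans h2) hc (rep2 hA (a := a') (f := c') hra ?_) hrc))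
  have := mul_mem_of_not hF hd hab hbc
  rwa [mul_assoc, mul_inv_cancel_left] at this

theorem rep3 (hF : LF F) {A : Matrix (Fin 3) (Fin 3) F} (hA : Good A) {e : F} (he : e ≠ 0)
    (h : ¬ IsSquare (-A.det * e)) : Rep A e := by
  obtain ⟨a, ha, hra⟩ := exists_rep hF.two hA
  obtain ⟨A', hA', hsA, s, hs, hsd⟩ := split hA ha hra
  obtain ⟨b, hb, hrb⟩ := exists_rep hF.two hA'
  obtain ⟨B', hB', hsB, t, ht, htd⟩ := split hA' hb hrb
  have hsc : SC (-A.det * e) (-(a * b * B'.det) * e) := by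
    refine ⟨s * t, mul_ne_zero hs ht, ?_⟩
    linear_combination (-a * e) * htd - t * t * e * hsd
  obtain ⟨x, y, z, hxyz⟩ := ternary hF ha hb hB'.2 he (fun hq => h (hsc.symm.isSquare hq))
  rw [← hxyz]
  exact hsA.rep (hsB.rep (rep1 B' z) y) x

theorem exists_nonsq (hF : LF F) : ∃ g : F, ¬ IsSquare g := by
  by_contra! h
  have : (powMonoidHom 2 : Fˣ →* Fˣ).range = ⊤ := by
    rw [eq_top_iff]
    intro f _
    obtain ⟨g, hg⟩ := h (f:F)
    have hg0 : g ≠ 0 := by rintro rfl; exact f.ne_zero (by simpa using hg)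
    exact ⟨Units.mk0 g hg0, by ext; simp [pow_two, hg]⟩
  have h4 := hF.sq
  rw [this] at h4
  simp at h4

theorem exists_nonsq_one_add (hF : LF F) : ∃ x : F, 1 + x * x = 0 ∨ ¬ IsSquare (1 + x * x) := by
  by_contra! h
  have hle : NG (-1 : F) ≤ (powMonoidHom 2 : Fˣ →* Fˣ).range := by
    rintro f ⟨x, y, hf⟩
    obtain ⟨g, hg⟩ : IsSquare (f:F) := by
      by_cases hy : y = 0
      · exact ⟨x, by rw [hf, hy]; ring⟩
      · obtain ⟨g, hg⟩ := (h (x / y)).2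
        refine ⟨y * g, ?_⟩
        have : y * g * (y * g) = y * y * (g * g) := by ring
        rw [this, ← hg, hf]
        field_simp
        ring
    have hg0 : g ≠ 0 := by rintro rfl; exact f.ne_zero (by simpa using hg)
    exact ⟨Units.mk0 g hg0, by ext; simp [pow_two, hg]⟩
  have hd := Subgroup.index_dvd_of_le hle
  have h4 := hF.sq
  have h5 : (NG (-1:F)).index = 1 ∨ (NG (-1:F)).index = 2 := by
    by_cases hs : IsSquare (-1:F)
    · left
      rw [Subgroup.index_eq_one, eq_top_iff]
      intro f _
      exact univ_of_sq hF (by simp) hs _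
    · exact Or.inr (hF.idx _ hs)
  have h6 := Nat.le_of_dvd (by omega) hd
  omega

theorem rep4 (hF : LF F) {A : Matrix (Fin 4) (Fin 4) F} (hA : Good A) : Rep A 1 := by
  have h2 := hF.two
  obtain ⟨a, ha, hra⟩ := exists_rep hF.two hA
  obtain ⟨B, hB, hsB, -⟩ := split hA ha hra
  suffices h : ∃ x f, a * (x * x) + f = 1 ∧ (f = 0 ∨ ¬ IsSquare (-B.det * f)) by
    obtain ⟨x, f, h1, h2⟩ := h
    rw [← h1]
    by_cases hf : f = 0
    · rw [hf]; exact hsB.rep (rep_zero B) x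
    · exact hsB.rep (rep3 hF hB hf (h2.resolve_left hf)) x
  by_cases hδ : IsSquare (-B.det)
  · have hsc : ∀ f, SC f (-B.det * f) := by
      intro f
      obtain ⟨s, hs⟩ := hδ
      refine ⟨s, ?_, by rw [hs]⟩
      rintro rfl
      apply hB.2
      linear_combination -hs
    suffices h : ∃ x, 1 - a * (x * x) = 0 ∨ ¬ IsSquare (1 - a * (x * x)) by
      obtain ⟨x, hx⟩ := h
      refine ⟨x, 1 - a * (x * x), by ring, hx.imp_right fun h h' => h ((hsc _).symm.isSquare h')⟩
    by_cases hna : IsSquare (-a)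
    · obtain ⟨c, hc⟩ := hna
      have hc0 : c ≠ 0 := by rintro rfl; apply ha; linear_combination -hc
      obtain ⟨x, hx⟩ := exists_nonsq_one_add hF
      refine ⟨x / c, ?_⟩
      have : 1 - a * (x / c * (x / c)) = 1 + x * x := by
        have : a = - (c * c) := by linear_combination -hc
        rw [this]; field_simp; ring
      rwa [this]
    · by_cases ha1 : a = 1
      · exact ⟨1, Or.inl (by rw [ha1]; ring)⟩
      · refine ⟨(1 + 1 / a) / 2, Or.inr fun hq => hna ?_⟩
        have hz : (1 / a - 1) / 2 ≠ 0 := by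
          apply div_ne_zero _ h2
          rw [sub_ne_zero, Ne, div_eq_one_iff_eq ha]
          exact fun h => ha1 h.symm
        refine SC.isSquare (SC.symm ⟨(1 / a - 1) / 2, hz, ?_⟩) hq
        field_simp
        ring
  · exact ⟨0, 1, by ring, Or.inr (by simpa using hδ)⟩

theorem rep_ge4 (hF : LF F) (n : ℕ) {A : Matrix (Fin (n+4)) (Fin (n+4)) F} (hA : Good A) :
    Rep A 1 := by
  induction n with
  | zero => exact rep4 hF hA
  | succ n ih =>
    obtain ⟨a, ha, hra⟩ := exists_rep hF.two hA
    obtain ⟨B, hB, hsB, -⟩ := split (n := n + 4) hA ha hra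
    have := hsB.rep (ih hB) 0
    simpa using this

theorem three_step {n : ℕ} (ih : ∀ {A B C : Matrix (Fin n) (Fin n) F}, Good A → Good B → Good C →
      SC A.det B.det → SC B.det C.det → Cong A B ∨ Cong A C ∨ Cong B C)
    {A B C : Matrix (Fin (n+1)) (Fin (n+1)) F} (hA : Good A) (hB : Good B)
    (hC : Good C) (h1 : SC A.det B.det) (h2 : SC B.det C.det) {e : F} (he : e ≠ 0)
    (hrA : Rep A e) (hrB : Rep B e) (hrC : Rep C e) : Cong A B ∨ Cong A C ∨ Cong B C := by
  obtain ⟨A', hA', hsA, s, hs, hsd⟩ := split hA he hrA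
  obtain ⟨B', hB', hsB, t, ht, htd⟩ := split hB he hrB
  obtain ⟨C', hC', hsC, u, hu, hud⟩ := split hC he hrC
  have h1' : SC A'.det B'.det :=
    SC.of_mul he ((SC.symm ⟨s, hs, hsd⟩).trans (h1.trans ⟨t, ht, htd⟩))
  have h2' : SC B'.det C'.det :=
    SC.of_mul he ((SC.symm ⟨t, ht, htd⟩).trans (h2.trans ⟨u, hu, hud⟩))
  rcases ih hA' hB' hC' h1' h2' with h | h | h
  · exact Or.inl (hsA.cong hsB h)
  · exact Or.inr (Or.inl (hsA.cong hsC h))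
  · exact Or.inr (Or.inr (hsB.cong hsC h))

theorem three3 (hF : LF F) {A B C : Matrix (Fin 3) (Fin 3) F} (hA : Good A) (hB : Good B)
    (hC : Good C) (h1 : SC A.det B.det) (h2 : SC B.det C.det) : Cong A B ∨ Cong A C ∨ Cong B C := by
  obtain ⟨g, hg⟩ := exists_nonsq hF
  have hg0 : g ≠ 0 := by rintro rfl; exact hg ⟨0, by simp⟩
  have he : -A.det * g ≠ 0 := mul_ne_zero (neg_ne_zero.mpr hA.2) hg0
  have hq : ¬ IsSquare (-A.det * (-A.det * g)) := fun h =>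
    hg (SC.isSquare (SC.symm ⟨A.det, hA.2, by ring⟩) h)
  refine three_step (fun hA hB hC => three2 hF hA hB hC) hA hB hC h1 h2 he (rep3 hF hA he hq)
    (rep3 hF hB he fun h => hq ((h1.neg_mul _).symm.isSquare h))
    (rep3 hF hC he fun h => hq (((h1.trans h2).neg_mul _).symm.isSquare h))

theorem three_ge3 (hF : LF F) (n : ℕ) {A B C : Matrix (Fin (n+3)) (Fin (n+3)) F} (hA : Good A)
    (hB : Good B) (hC : Good C) (h1 : SC A.det B.det) (h2 : SC B.det C.det) :
    Cong A B ∨ Cong A C ∨ Cong B C := by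
  induction n with
  | zero => exact three3 hF hA hB hC h1 h2
  | succ n ih =>
    exact three_step (n := n + 3) (fun hA hB hC h1 h2 => ih hA hB hC h1 h2) hA hB hC h1 h2
      one_ne_zero (rep_ge4 hF n hA) (rep_ge4 hF n hB) (rep_ge4 hF n hC)

theorem three_all (hF : LF F) (n : ℕ) (hn : 1 ≤ n) {A B C : Matrix (Fin n) (Fin n) F} (hA : Good A)
    (hB : Good B) (hC : Good C) (h1 : SC A.det B.det) (h2 : SC B.det C.det) :
    Cong A B ∨ Cong A C ∨ Cong B C := by
  match n, hn with
  | 1, _ => exact Or.inl (cong1 h1)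
  | 2, _ => exact three2 hF hA hB hC h1 h2
  | n + 3, _ => exact three_ge3 hF n hA hB hC h1 h2

end forms2

end OrthAux

namespace OrthAux

section glue
open Matrix OrthPair

theorem LF_of (p : ℕ) [Fact p.Prime] (F : Type) [Field F] [Algebra ℚ_[p] F]
    [FiniteDimensional ℚ_[p] F] : LF F where
  two := by
    have hc : CharZero F := charZero_of_injective_algebraMap (algebraMap ℚ_[p] F).injective
    exact two_ne_zero
  idx := index_NG p F
  sq := by
    rw [index_sq p F]
    have : Nat.card (ℤ_[p] ⧸ Ideal.span {(2 : ℤ_[p])}) ^ Module.finrank ℚ_[p] F ≠ 0 :=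
      pow_ne_zero _ (card_quot_ne_zero p _ two_ne_zero)
    omega

/-- reflections. -/
theorem exists_refl {F : Type} [Field F] (h2 : (2:F) ≠ 0) {n : ℕ} (hn : 1 ≤ n)
    {A : Matrix (Fin n) (Fin n) F} (hA : Good A) :
    ∃ r : Matrix (Fin n) (Fin n) F, r * r = 1 ∧ rᵀ * A * r = A ∧ r.det = -1 := by
  obtain ⟨m, rfl⟩ : ∃ m, n = m + 1 := ⟨n - 1, by omega⟩
  obtain ⟨e, he, hr⟩ := exists_rep h2 hA
  obtain ⟨A', hA', hs, -⟩ := split hA he hr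
  have hs' := hs.symm
  obtain ⟨P, Q, h1, h3, h4⟩ := hs
  set D : Matrix (Unit ⊕ Fin m) (Unit ⊕ Fin m) F := fromBlocks (-1) 0 0 1 with hD
  set M : Matrix (Unit ⊕ Fin m) (Unit ⊕ Fin m) F :=
    fromBlocks (e • (1 : Matrix Unit Unit F)) 0 0 A' with hM
  have hDD : D * D = 1 := by simp [hD, fromBlocks_multiply]
  have hDM : Dᵀ * M * D = M := by simp [hD, hM, fromBlocks_multiply, fromBlocks_transpose]
  have h5 : Qᵀ * Pᵀ = 1 := by rw [← transpose_mul, h1, transpose_one]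
  refine ⟨P * D * Q, ?_, ?_, ?_⟩
  · calc P * D * Q * (P * D * Q) = P * (D * (Q * P) * D) * Q := by simp only [Matrix.mul_assoc]
      _ = 1 := by rw [h3, Matrix.mul_one, hDD, Matrix.mul_one, h1]
  · calc (P * D * Q)ᵀ * A * (P * D * Q) = Qᵀ * (Dᵀ * (Pᵀ * A * P) * D) * Q := by
          simp only [transpose_mul, Matrix.mul_assoc]
      _ = Qᵀ * (Pᵀ * A * P) * Q := by rw [h4, hDM]
      _ = (Qᵀ * Pᵀ) * A * (P * Q) := by simp only [Matrix.mul_assoc]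
      _ = A := by rw [h5, h1, Matrix.one_mul, Matrix.mul_one]
  · rw [det_conj_of_mul_eq_one h1 h3, hD, det_fromBlocks_zero₂₁]
    simp

variable {p : ℕ} [Fact p.Prime] {E : Type} [Field E] [Algebra ℚ_[p] E]
  {σ : E ≃ₐ[ℚ_[p]] E} {n : ℕ}

theorem map_mulσ (A B : Matrix (Fin n) (Fin n) E) :
    (A * B).map σ = A.map σ * B.map σ := Matrix.map_mul (f := (σ : E →+* E))

theorem det_mapσ (A : Matrix (Fin n) (Fin n) E) : (A.map σ).det = σ A.det :=
  ((σ : E →+* E).map_det A).symm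

theorem map_oneσ : (1 : Matrix (Fin n) (Fin n) E).map σ = 1 :=
  Matrix.map_one _ (map_zero σ) (map_one σ)

theorem hilbert90 (ι : E) (hι : σ ι = -ι) (hι1 : σ ι ≠ ι) (x : Matrix (Fin n) (Fin n) E)
    (hx : x * x.map σ = 1) : ∃ h : Matrix (Fin n) (Fin n) E, h.det ≠ 0 ∧ x * h.map σ = h := by
  have hc : CharZero E := charZero_of_injective_algebraMap (algebraMap ℚ_[p] E).injective
  have hι0 : ι ≠ 0 := by rintro rfl; simp at hι1
  have hne : ∀ t : ℕ, ι - (t:E) ≠ 0 := by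
    intro t h
    apply hι1
    have : ι = t := by linear_combination h
    rw [this]; simp
  let μ : ℕ → E := fun t => (ι + t) / (ι - t)
  have hμ : Function.Injective μ := by
    intro s t hst
    simp only [μ] at hst
    rw [div_eq_div_iff (hne s) (hne t)] at hst
    have h2 : (2 * ι) * ((s:E) - t) = 0 := by linear_combination hst
    have h3 : (s:E) - t = 0 := by
      rcases mul_eq_zero.mp h2 with h | h
      · exact absurd h (mul_ne_zero two_ne_zero hι0)
      · exact h
    exact_mod_cast sub_eq_zero.mp h3
  obtain ⟨t, ht⟩ : ∃ t, x.charpoly.eval (μ t) ≠ 0 := by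
    by_contra! h
    classical
    apply Set.infinite_range_of_injective hμ
    refine Set.Finite.subset (Finset.finite_toSet x.charpoly.roots.toFinset) ?_
    rintro _ ⟨t, rfl⟩
    simp only [Finset.mem_coe, Multiset.mem_toFinset]
    rw [Polynomial.mem_roots (charpoly_monic x).ne_zero]
    exact h t
  rw [eval_charpoly] at ht
  refine ⟨(ι - t) • (scalar (Fin n) (μ t) - x), ?_, ?_⟩
  · rw [det_smul]
    exact mul_ne_zero (pow_ne_zero _ (hne t)) ht
  · have e1 : (ι - t) • (scalar (Fin n) (μ t) - x) = (ι + t) • (1 : Matrix (Fin n) (Fin n) E) -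
        (ι - t) • x := by
      rw [smul_sub]
      congr 1
      ext a b
      have := hne t
      by_cases hab : a = b
      · subst hab; simp [μ]; field_simp
      · simp [hab]
    have e2 : ((ι + t) • (1 : Matrix (Fin n) (Fin n) E) - (ι - t) • x).map σ =
        (-ι + t) • (1 : Matrix (Fin n) (Fin n) E) - (-ι - t) • x.map σ := by
      ext a b
      by_cases hab : a = b
      · subst hab; simp [hι]
      · simp [hab, hι]
    rw [e1, e2, Matrix.mul_sub, mul_smul_comm, mul_smul_comm, hx, Matrix.mul_one]
    module

variable {K : IntermediateField ℚ_[p] E}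

/-- extension of scalars of matrices. -/
noncomputable def up (K : IntermediateField ℚ_[p] E) (A : Matrix (Fin n) (Fin n) K) :
    Matrix (Fin n) (Fin n) E := A.map (algebraMap K E)

theorem up_mul (A B : Matrix (Fin n) (Fin n) K) : up K (A * B) = up K A * up K B :=
  Matrix.map_mul (f := algebraMap K E)

theorem up_one : up K (1 : Matrix (Fin n) (Fin n) K) = 1 :=
  Matrix.map_one _ (map_zero _) (map_one _)

theorem up_tr (A : Matrix (Fin n) (Fin n) K) : up K Aᵀ = (up K A)ᵀ := rfl

theorem up_det (A : Matrix (Fin n) (Fin n) K) : (up K A).det = (A.det : E) :=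
  ((algebraMap K E).map_det A).symm

theorem up_inj {A B : Matrix (Fin n) (Fin n) K} (h : up K A = up K B) : A = B := by
  ext a b
  exact congrFun (congrFun h a) b

theorem up_σ (hK : ∀ x, x ∈ K ↔ σ x = x) (A : Matrix (Fin n) (Fin n) K) :
    (up K A).map σ = up K A := by
  ext a b
  exact (hK _).mp (A a b).2

theorem exists_up (hK : ∀ x, x ∈ K ↔ σ x = x) (A : Matrix (Fin n) (Fin n) E)
    (hA : A.map σ = A) : ∃ B, up K B = A :=
  ⟨fun a b => ⟨A a b, (hK _).mpr (congrFun (congrFun hA a) b)⟩, rfl⟩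

theorem desc (hK : ∀ x, x ∈ K ↔ σ x = x) (ι : E) (hι : σ ι = -ι) (hι1 : σ ι ≠ ι)
    {j x : Matrix (Fin n) (Fin n) E} (hj : j.map σ = j) (hjd : j.det ≠ 0) (hjs : jᵀ = j)
    (hx : Xj σ j x) {θ : E} (hθ : θ ≠ 0) (hxθ : x.det * σ θ = θ) {D : K}
    (hD : (D : E) = θ * θ * j.det) :
    ∃ h Y, h.det ≠ 0 ∧ x * h.map σ = h ∧ up K Y = hᵀ * j * h ∧ Good Y ∧ SC D Y.det := by
  obtain ⟨⟨-, hxj⟩, hxx⟩ := hx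
  obtain ⟨h, hd, hh⟩ := hilbert90 ι hι hι1 x hxx
  have hxx' : x.map σ * x = 1 := mul_eq_one_comm.mp hxx
  have hh' : h.map σ = x.map σ * h := by
    conv_rhs => rw [← hh]
    rw [← Matrix.mul_assoc, hxx', Matrix.one_mul]
  have hxj' : (x.map σ)ᵀ * j * x.map σ = j := by
    have := congrArg (fun M : Matrix (Fin n) (Fin n) E => M.map σ) hxj
    simp only [map_mulσ, hj] at this
    exact this
  have hy : (hᵀ * j * h).map σ = hᵀ * j * h := by
    rw [map_mulσ, map_mulσ, hj, transpose_map, hh', transpose_mul]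
    calc hᵀ * (x.map σ)ᵀ * j * (x.map σ * h) = hᵀ * ((x.map σ)ᵀ * j * x.map σ) * h := by
          simp only [Matrix.mul_assoc]
      _ = _ := by rw [hxj']
  obtain ⟨Y, hY⟩ := exists_up hK _ hy
  have hYd : (Y.det : E) = h.det * j.det * h.det := by
    rw [← up_det, hY, det_mul, det_mul, det_transpose]
  refine ⟨h, Y, hd, hh, hY, ⟨?_, ?_⟩, ?_⟩
  · apply up_inj
    rw [up_tr, hY]
    simp [transpose_mul, hjs, Matrix.mul_assoc]
  · intro h0
    rw [h0] at hYd
    exact mul_ne_zero (mul_ne_zero hd hjd) hd hYd.symm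
  · have hdd : x.det * σ h.det = h.det := by
      rw [← det_mapσ, ← det_mul, hh]
    have hx0 : x.det ≠ 0 := fun h0 => hd (by rw [← hdd, h0, zero_mul])
    have hσθ : σ θ ≠ 0 := by simpa using hθ
    have hc : σ (h.det / θ) = h.det / θ := by
      rw [map_div₀, div_eq_div_iff hσθ hθ]
      apply mul_left_cancel₀ hx0
      linear_combination θ * hdd - h.det * hxθ
    refine ⟨⟨h.det / θ, (hK _).mpr hc⟩, ?_, ?_⟩
    · intro h0
      exact div_ne_zero hd hθ (congrArg Subtype.val h0)
    · apply Subtype.ext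
      change (Y.det : E) = h.det / θ * (h.det / θ) * D
      rw [hYd, hD]
      field_simp

theorem orbit (hK : ∀ x, x ∈ K ↔ σ x = x) (h2 : (2 : K) ≠ 0) (hn : 1 ≤ n)
    {j x₁ x₂ h₁ h₂ : Matrix (Fin n) (Fin n) E} {Y₁ Y₂ : Matrix (Fin n) (Fin n) K}
    (hjd : j.det ≠ 0)
    (hd₁ : h₁.det ≠ 0) (hh₁ : x₁ * h₁.map σ = h₁) (hY₁ : up K Y₁ = h₁ᵀ * j * h₁) (hg : Good Y₁)
    (hd₂ : h₂.det ≠ 0) (hh₂ : x₂ * h₂.map σ = h₂) (hY₂ : up K Y₂ = h₂ᵀ * j * h₂)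
    (hc : Cong Y₁ Y₂) : orbSG σ j x₁ x₂ := by
  have hi := mul_nonsing_inv h₁ hd₁.isUnit
  have hi' := nonsing_inv_mul h₁ hd₁.isUnit
  have key : ∀ Q : Matrix (Fin n) (Fin n) K, Qᵀ * Y₂ * Q = Y₁ →
      Gj j (h₂ * up K Q * h₁⁻¹) ∧ x₂ = (h₂ * up K Q * h₁⁻¹) * x₁ *
        ((h₂ * up K Q * h₁⁻¹).map σ)⁻¹ := by
    intro Q hQ
    set g := h₂ * up K Q * h₁⁻¹ with hgdef
    have hgh : g * h₁ = h₂ * up K Q := by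
      rw [hgdef, Matrix.mul_assoc, hi', Matrix.mul_one]
    have hgj : gᵀ * j * g = j := by
      have e1 : h₁ᵀ * (gᵀ * j * g) * h₁ = h₁ᵀ * j * h₁ := by
        calc h₁ᵀ * (gᵀ * j * g) * h₁ = (g * h₁)ᵀ * j * (g * h₁) := by
              simp only [transpose_mul, Matrix.mul_assoc]
          _ = (up K Q)ᵀ * (h₂ᵀ * j * h₂) * up K Q := by
              rw [hgh]; simp only [transpose_mul, Matrix.mul_assoc]
          _ = _ := by rw [← hY₂, ← up_tr, ← up_mul, ← up_mul, hQ, hY₁]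
      have hit : (h₁⁻¹)ᵀ * h₁ᵀ = 1 := by rw [← transpose_mul, hi, transpose_one]
      calc gᵀ * j * g = ((h₁⁻¹)ᵀ * h₁ᵀ) * (gᵀ * j * g) * (h₁ * h₁⁻¹) := by
            rw [hit, hi, Matrix.one_mul, Matrix.mul_one]
        _ = (h₁⁻¹)ᵀ * (h₁ᵀ * (gᵀ * j * g) * h₁) * h₁⁻¹ := by simp only [Matrix.mul_assoc]
        _ = ((h₁⁻¹)ᵀ * h₁ᵀ) * j * (h₁ * h₁⁻¹) := by rw [e1]; simp only [Matrix.mul_assoc]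
        _ = j := by rw [hit, hi, Matrix.one_mul, Matrix.mul_one]
    have hgd : g.det ≠ 0 := by
      intro h0
      have := congrArg Matrix.det hgj
      rw [det_mul, h0, mul_zero] at this
      exact hjd this.symm
    refine ⟨⟨(isUnit_iff_isUnit_det g).mpr hgd.isUnit, hgj⟩, ?_⟩
    have hσd : (h₁.map σ).det ≠ 0 := by rw [det_mapσ]; simpa using hd₁
    have hσg : IsUnit (g.map σ).det := by
      rw [det_mapσ]; exact IsUnit.mk0 _ (by simpa using hgd)
    have e2 : g.map σ * h₁.map σ = h₂.map σ * up K Q := by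
      rw [← map_mulσ, hgh, map_mulσ, up_σ hK]
    have e3 : x₂ * g.map σ = g * x₁ := by
      have e4 : x₂ * g.map σ * h₁.map σ = g * x₁ * h₁.map σ := by
        rw [Matrix.mul_assoc, e2, ← Matrix.mul_assoc, hh₂, Matrix.mul_assoc g, hh₁, hgh]
      have e5 := congrArg (fun M => M * (h₁.map σ)⁻¹) e4
      simpa only [mul_nonsing_inv_cancel_right _ _ hσd.isUnit] using e5
    rw [← e3, mul_nonsing_inv_cancel_right _ _ hσg]
  obtain ⟨Q, P, h1, h3, hQ⟩ := hc.symm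
  obtain ⟨hG, hx⟩ := key Q hQ
  have hdet : (h₂ * up K Q * h₁⁻¹).det = 1 ∨ (h₂ * up K Q * h₁⁻¹).det = -1 := by
    have := congrArg Matrix.det hG.2
    rw [det_mul, det_mul, det_transpose] at this
    apply mul_self_eq_one_iff.mp
    apply mul_left_cancel₀ hjd
    linear_combination this
  rcases hdet with hdet | hdet
  · exact ⟨_, hG, hdet, hx⟩
  · obtain ⟨r, -, hr, hrd⟩ := exists_refl h2 hn hg
    obtain ⟨hG', hx'⟩ := key (Q * r) (by
      rw [← hr, ← hQ]
      simp only [transpose_mul, Matrix.mul_assoc])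
    refine ⟨_, hG', ?_, hx'⟩
    have : (up K r).det = -1 := by rw [up_det, hrd]; simp
    rw [up_mul, det_mul, det_mul, det_mul, this]
    rw [det_mul, det_mul] at hdet
    linear_combination -hdet

/-- the fixed field of `σ`. -/
noncomputable def fixF (σ : E ≃ₐ[ℚ_[p]] E) : IntermediateField ℚ_[p] E where
  toSubalgebra := AlgHom.equalizer (σ : E →ₐ[ℚ_[p]] E) (AlgHom.id ℚ_[p] E)
  inv_mem' := by
    intro x hx
    have hx : σ x = x := hx
    change σ x⁻¹ = x⁻¹
    rw [map_inv₀, hx]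

theorem mem_fixF (σ : E ≃ₐ[ℚ_[p]] E) (x : E) : x ∈ fixF σ ↔ σ x = x := Iff.rfl

end glue

end OrthAux
/-- In the orthogonal case, each of `SX^j` and `X^j \ SX^j` contains at
most two `SG^j(E)`-orbits.  Moreover, for `n = 2`: if `det j ∈ -F^{×2}` then `SX^j` is a
single `SG^j(E)`-orbit, and if `det j ∈ -ι²·F^{×2}` then `X^j \ SX^j` is a single
`SG^j(E)`-orbit.  (`F` is the fixed field of `σ`, and `ι ∈ E \ F` satisfies `ι² ∈ F`.) -/
theorem stmt_10 (p : ℕ) [Fact p.Prime]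
    (E : Type) [Field E] [Algebra ℚ_[p] E] [FiniteDimensional ℚ_[p] E]
    (σ : E ≃ₐ[ℚ_[p]] E) (hσ1 : σ ≠ 1) (hσ2 : σ * σ = 1)
    (ι : E) (hι1 : σ ι ≠ ι) (hι2 : σ (ι * ι) = ι * ι)
    (n : ℕ) (hn : 1 ≤ n)
    (j : Matrix (Fin n) (Fin n) E)
    (hjF : ∀ a b, σ (j a b) = j a b) (hjU : IsUnit j) (hjsym : jᵀ = j) :
    -- SX^j contains at most two SG^j(E)-orbits
    (∀ x₁ x₂ x₃, SXj ⇑σ j x₁ → SXj ⇑σ j x₂ → SXj ⇑σ j x₃ →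
      orbSG ⇑σ j x₁ x₂ ∨ orbSG ⇑σ j x₁ x₃ ∨ orbSG ⇑σ j x₂ x₃) ∧
    -- X^j \ SX^j contains at most two SG^j(E)-orbits
    (∀ x₁ x₂ x₃, Xj ⇑σ j x₁ → x₁.det ≠ 1 → Xj ⇑σ j x₂ → x₂.det ≠ 1 →
      Xj ⇑σ j x₃ → x₃.det ≠ 1 →
      orbSG ⇑σ j x₁ x₂ ∨ orbSG ⇑σ j x₁ x₃ ∨ orbSG ⇑σ j x₂ x₃) ∧
    -- n = 2, det j ∈ -F^{×2}: SX^j is a single orbit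
    (n = 2 → (∃ c, σ c = c ∧ c ≠ 0 ∧ j.det = -(c * c)) →
      ∃ x₀, SXj ⇑σ j x₀ ∧ ∀ x, SXj ⇑σ j x → orbSG ⇑σ j x₀ x) ∧
    -- n = 2, det j ∈ -ι²·F^{×2}: X^j \ SX^j is a single orbit
    (n = 2 → (∃ c, σ c = c ∧ c ≠ 0 ∧ j.det = -(ι * ι * (c * c))) →
      ∃ x₀, (Xj ⇑σ j x₀ ∧ x₀.det ≠ 1) ∧
        ∀ x, Xj ⇑σ j x → x.det ≠ 1 → orbSG ⇑σ j x₀ x) := by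
  have hι : σ ι = -ι := by
    rw [map_mul] at hι2
    rcases mul_self_eq_mul_self_iff.mp hι2 with h | h
    · exact absurd h hι1
    · exact h
  have hι0 : ι ≠ 0 := by rintro rfl; simp at hι1
  let K := OrthAux.fixF σ
  have hK : ∀ x, x ∈ K ↔ σ x = x := OrthAux.mem_fixF σ
  have hF : OrthAux.LF K := OrthAux.LF_of p K
  have hjd : j.det ≠ 0 := ((Matrix.isUnit_iff_isUnit_det j).mp hjU).ne_zero
  have hj : j.map σ = j := by ext a b; exact hjF a b
  obtain ⟨J, hJ⟩ := OrthAux.exists_up hK j hj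
  have hJd : (J.det : E) = j.det := by rw [← OrthAux.up_det, hJ]
  have hJg : OrthAux.Good J := by
    constructor
    · apply OrthAux.up_inj
      rw [OrthAux.up_tr, hJ, hjsym]
    · intro h0
      apply hjd
      rw [← hJd, h0]; rfl
  have hdet : ∀ x, Xj σ j x → x.det ≠ 1 → x.det * σ ι = ι := by
    intro x hx h1
    have h2 := congrArg Matrix.det hx.1.2
    rw [det_mul, det_mul, det_transpose] at h2
    have h3 : x.det * x.det = 1 := by
      apply mul_left_cancel₀ hjd
      linear_combination h2
    have h4 : x.det = -1 := (mul_self_eq_one_iff.mp h3).resolve_left h1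
    rw [h4, hι]; ring
  have three : ∀ θ : E, θ ≠ 0 → σ (θ * θ) = θ * θ → ∀ x₁ x₂ x₃, Xj σ j x₁ → Xj σ j x₂ →
      Xj σ j x₃ → x₁.det * σ θ = θ → x₂.det * σ θ = θ → x₃.det * σ θ = θ →
      orbSG ⇑σ j x₁ x₂ ∨ orbSG ⇑σ j x₁ x₃ ∨ orbSG ⇑σ j x₂ x₃ := by
    intro θ hθ hθ2 x₁ x₂ x₃ hx₁ hx₂ hx₃ h₁ h₂ h₃
    let D : K := ⟨θ * θ, (hK _).mpr hθ2⟩ * J.det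
    have hD : (D : E) = θ * θ * j.det := by rw [← hJd]; rfl
    obtain ⟨g₁, Y₁, a₁, b₁, c₁, d₁, e₁⟩ := OrthAux.desc hK ι hι hι1 hj hjd hjsym hx₁ hθ h₁ hD
    obtain ⟨g₂, Y₂, a₂, b₂, c₂, d₂, e₂⟩ := OrthAux.desc hK ι hι hι1 hj hjd hjsym hx₂ hθ h₂ hD
    obtain ⟨g₃, Y₃, a₃, b₃, c₃, d₃, e₃⟩ := OrthAux.desc hK ι hι hι1 hj hjd hjsym hx₃ hθ h₃ hD
    rcases OrthAux.three_all hF n hn d₁ d₂ d₃ (e₁.symm.trans e₂) (e₂.symm.trans e₃) with h | h | h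
    · exact Or.inl (OrthAux.orbit hK hF.two hn hjd a₁ b₁ c₁ d₁ a₂ b₂ c₂ h)
    · exact Or.inr (Or.inl (OrthAux.orbit hK hF.two hn hjd a₁ b₁ c₁ d₁ a₃ b₃ c₃ h))
    · exact Or.inr (Or.inr (OrthAux.orbit hK hF.two hn hjd a₂ b₂ c₂ d₂ a₃ b₃ c₃ h))
  have single : n = 2 → ∀ θ : E, θ ≠ 0 → σ (θ * θ) = θ * θ →
      (∃ c, σ c = c ∧ θ * θ * j.det = -(c * c)) → ∀ x₁ x₂, Xj σ j x₁ → Xj σ j x₂ →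
      x₁.det * σ θ = θ → x₂.det * σ θ = θ → orbSG ⇑σ j x₁ x₂ := by
    intro hn2 θ hθ hθ2 ⟨c, hc, hcd⟩ x₁ x₂ hx₁ hx₂ h₁ h₂
    let D : K := ⟨θ * θ, (hK _).mpr hθ2⟩ * J.det
    have hD : (D : E) = θ * θ * j.det := by rw [← hJd]; rfl
    have hsq : IsSquare (-D * 1) := by
      refine ⟨⟨c, (hK _).mpr hc⟩, ?_⟩
      apply Subtype.ext
      rw [mul_one]
      change -(D : E) = c * c
      rw [hD, hcd]; ring
    obtain ⟨g₁, Y₁, a₁, b₁, c₁, d₁, e₁⟩ := OrthAux.desc hK ι hι hι1 hj hjd hjsym hx₁ hθ h₁ hD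
    obtain ⟨g₂, Y₂, a₂, b₂, c₂, d₂, e₂⟩ := OrthAux.desc hK ι hι hι1 hj hjd hjsym hx₂ hθ h₂ hD
    refine OrthAux.orbit hK hF.two hn hjd a₁ b₁ c₁ d₁ a₂ b₂ c₂ ?_
    have s₁ := (e₁.neg_mul 1).isSquare hsq
    have s₂ := (e₂.neg_mul 1).isSquare hsq
    rw [mul_one] at s₁ s₂
    clear_value K
    subst hn2
    exact OrthAux.cong2_univ hF d₁ d₂ s₁ s₂
  refine ⟨?_, ?_, ?_, ?_⟩
  · intro x₁ x₂ x₃ h₁ h₂ h₃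
    exact three 1 one_ne_zero (by simp) x₁ x₂ x₃ h₁.1 h₂.1 h₃.1 (by simp [h₁.2]) (by simp [h₂.2])
      (by simp [h₃.2])
  · intro x₁ x₂ x₃ h₁ h₁' h₂ h₂' h₃ h₃'
    exact three ι hι0 hι2 x₁ x₂ x₃ h₁ h₂ h₃ (hdet _ h₁ h₁') (hdet _ h₂ h₂') (hdet _ h₃ h₃')
  · rintro hn2 ⟨c, hc, -, hcd⟩
    have h1 : SXj σ j (1 : Matrix (Fin n) (Fin n) E) :=
      ⟨⟨⟨isUnit_one, by simp⟩, by rw [OrthAux.map_oneσ, Matrix.one_mul]⟩, det_one⟩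
    refine ⟨1, h1, fun x hx => ?_⟩
    exact single hn2 1 one_ne_zero (by simp) ⟨c, hc, by rw [hcd]; ring⟩ 1 x h1.1 hx.1
      (by simp) (by simp [hx.2])
  · rintro hn2 ⟨c, hc, -, hcd⟩
    obtain ⟨r, hr1, hr2, hr3⟩ := OrthAux.exists_refl hF.two hn hJg
    have hrr : OrthAux.up K r * OrthAux.up K r = 1 := by
      rw [← OrthAux.up_mul, hr1, OrthAux.up_one]
    have hc2 : CharZero E := charZero_of_injective_algebraMap (algebraMap ℚ_[p] E).injective
    have hd1 : (OrthAux.up K r).det ≠ 1 := by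
      rw [OrthAux.up_det, hr3]
      change (-1 : E) ≠ 1
      intro h
      apply (two_ne_zero : (2:E) ≠ 0)
      linear_combination -h
    have hX : Xj σ j (OrthAux.up K r) := by
      refine ⟨⟨IsUnit.of_mul_eq_one _ hrr, ?_⟩, ?_⟩
      · rw [← hJ, ← OrthAux.up_tr, ← OrthAux.up_mul, ← OrthAux.up_mul, hr2]
      · rw [OrthAux.up_σ hK, hrr]
    refine ⟨OrthAux.up K r, ⟨hX, hd1⟩, fun x hx hx1 => ?_⟩
    exact single hn2 ι hι0 hι2 ⟨ι * ι * c, by rw [map_mul, hι2, hc], by rw [hcd]; ring⟩ _ x hX hx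
      (hdet _ hX hd1) (hdet _ hx hx1)
end
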